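/- Let (E,𝒞,r) be a semimatroid without loops. Then the sequence w_0(𝒞), w_1(𝒞), …, w_{r(𝒞)}(𝒞) of unsigned Whitney numbers of the first kind is log-concave: w_{k−1}(𝒞) · w_{k+1}(𝒞) ≤ w_k(𝒞)^2 for every 1 ≤ k ≤ r(𝒞) − 1. -/

import Mathlib

/-- A semimatroid on a finite ground set `E`: a nonempty, subset-closed collection `C`
of "central" subsets of `E`, together with a rank function `r` satisfying (SR1)-(SR5). -/
structure Semimatroid (E : Type*) [DecidableEq E] [Fintype E] where
  C : Finset (Finset E)
  r : Finset E → ℕ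
  C_nonempty : C.Nonempty
  mem_of_subset : ∀ ⦃X Y : Finset E⦄, X ∈ C → Y ⊆ X → Y ∈ C
  r_le_card : ∀ ⦃X : Finset E⦄, X ∈ C → r X ≤ X.card
  r_mono : ∀ ⦃X Y : Finset E⦄, X ∈ C → Y ∈ C → X ⊆ Y → r X ≤ r Y
  submodular : ∀ ⦃X Y : Finset E⦄, X ∈ C → Y ∈ C → X ∪ Y ∈ C →
    r (X ∩ Y) + r (X ∪ Y) ≤ r X + r Y
  union_mem : ∀ ⦃X Y : Finset E⦄, X ∈ C → Y ∈ C → r X = r (X ∩ Y) → X ∪ Y ∈ C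
  augment : ∀ ⦃X Y : Finset E⦄, X ∈ C → Y ∈ C → r X < r Y →
    ∃ e ∈ Y \ X, insert e X ∈ C

namespace Semimatroid

variable {E : Type*} [DecidableEq E] [Fintype E] (S : Semimatroid E)

/-- The rank `r(𝒞)` of the semimatroid: the common rank of the maximal central sets. -/
def rank : ℕ := S.C.sup S.r

/-- The closure of a central set `X`:
`cl X = {e ∈ E : X ∪ {e} ∈ 𝒞 and r (X ∪ {e}) = r X}`. -/
def cl (X : Finset E) : Finset E :=
  Finset.univ.filter fun e => insert e X ∈ S.C ∧ S.r (insert e X) = S.r X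

/-- The flats of the semimatroid: central sets `X` with `cl X = X`. -/
def flats : Finset (Finset E) := S.C.filter fun X => S.cl X = X

/-- The characteristic polynomial `χ(𝒞;t) = Σ_{X ∈ 𝒞} (−1)^{|X|} t^{r(𝒞)−r(X)}`. -/
noncomputable def charPoly : Polynomial ℤ :=
  ∑ A ∈ S.C, (-1 : Polynomial ℤ) ^ A.card * Polynomial.X ^ (S.rank - S.r A)

end Semimatroid

namespace Semimatroid

variable {E : Type*} [DecidableEq E] [Fintype E] (S : Semimatroid E)

/-- The `i`-th unsigned Whitney number of the first kind:
`w_i(𝒞) = (−1)^i ⋅ (coefficient of t^{r(𝒞)−i} in χ(𝒞;t))`. -/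
noncomputable def whitney (i : ℕ) : ℤ :=
  (-1 : ℤ) ^ i * S.charPoly.coeff (S.rank - i)

end Semimatroid



namespace SWL

/-- A system of flats: graded family of sets such that atoms over `A` partition. -/
structure FlatSys (α : Type*) [DecidableEq α] where
  L : Finset (Finset α)
  rk : Finset α → ℕ
  rk_lt : ∀ A ∈ L, ∀ B ∈ L, A ⊂ B → rk A < rk B
  cov : ∀ A ∈ L, ∀ B ∈ L, A ⊂ B → ∀ i ∈ B, i ∉ A →
    ∃ G ∈ L, A ⊂ G ∧ G ⊆ B ∧ i ∈ G ∧ rk G = rk A + 1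
  cov_unique : ∀ A ∈ L, ∀ G ∈ L, ∀ G' ∈ L, A ⊂ G → A ⊂ G' → rk G = rk A + 1 →
    rk G' = rk A + 1 → ∀ i, i ∈ G → i ∈ G' → i ∉ A → G = G'

namespace FlatSys

variable {α : Type*} [DecidableEq α] (S : FlatSys α) {R : Type*} [CommRing R]

def betw (A B : Finset α) : Finset (Finset α) := S.L.filter fun G => A ⊂ G ∧ G ⊂ B

lemma mem_betw {A B G : Finset α} : G ∈ S.betw A B ↔ G ∈ S.L ∧ A ⊂ G ∧ G ⊂ B := by
  simp [betw]

lemma sum_swap {M : Type*} [AddCommMonoid M] (A B : Finset α) (f : Finset α → Finset α → M) :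
    ∑ G ∈ S.betw A B, ∑ H ∈ S.betw A G, f H G = ∑ H ∈ S.betw A B, ∑ G ∈ S.betw H B, f H G := by
  apply Finset.sum_comm'
  intro G H
  simp only [mem_betw]
  constructor
  · rintro ⟨⟨a, b, c⟩, d, e, f⟩
    exact ⟨⟨a, f, c⟩, d, e, f.trans c⟩
  · rintro ⟨⟨a, b, c⟩, d, e, f⟩
    exact ⟨⟨a, e.trans b, c⟩, d, e, b⟩

/-- indicator -/
def chi (R : Type*) [CommRing R] (i : α) (F : Finset α) : R := if i ∈ F then 1 else 0

lemma chi_mem {i : α} {F : Finset α} (h : i ∈ F) : chi R i F = 1 := by simp [chi, h]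
lemma chi_not_mem {i : α} {F : Finset α} (h : i ∉ F) : chi R i F = 0 := by simp [chi, h]

open Classical in
noncomputable def pickO (A B : Finset α) : Option α :=
  if h : ∃ i, i ∈ B ∧ i ∉ A then some h.choose else none

noncomputable def pchi (R : Type*) [CommRing R] (A B F : Finset α) : R :=
  match pickO A B with
  | some i => chi R i F
  | none => 0

lemma exists_pick {A B : Finset α} (h : A ⊂ B) :
    ∃ i, i ∈ B ∧ i ∉ A ∧ ∀ F, pchi R A B F = chi R i F := by
  have h' : ∃ i, i ∈ B ∧ i ∉ A := Finset.exists_of_ssubset h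
  refine ⟨h'.choose, h'.choose_spec.1, h'.choose_spec.2, fun F => ?_⟩
  have : pickO A B = some h'.choose := by unfold pickO; rw [dif_pos h']
  simp [pchi, this]

/-- Linear functional attached to a weight `w` on the open interval `(A,B)`. -/
noncomputable def Lw (w : Finset α → R) (A B : Finset α) (x : Finset α → R) : R :=
  ∑ G ∈ S.betw A B, (x G - x A - (x B - x A) * pchi R A B G) * w G

def Bal (w : Finset α → R) (A B : Finset α) : Prop :=
  ∀ i ∈ B, i ∉ A → ∀ j ∈ B, j ∉ A →
    ∑ G ∈ S.betw A B, chi R i G * w G = ∑ G ∈ S.betw A B, chi R j G * w G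

lemma Lw_eq {w : Finset α → R} {A B : Finset α} (hb : S.Bal w A B) (hAB : A ⊂ B) {i : α}
    (hi : i ∈ B) (hi' : i ∉ A) (x : Finset α → R) :
    S.Lw w A B x = ∑ G ∈ S.betw A B, (x G - x A - (x B - x A) * chi R i G) * w G := by
  obtain ⟨j, hj, hj', hp⟩ := exists_pick (R := R) hAB
  unfold Lw
  simp only [hp, sub_mul, Finset.sum_sub_distrib, mul_assoc, ← Finset.mul_sum]
  rw [hb i hi hi' j hj hj']

lemma Lw_add (w : Finset α → R) (A B : Finset α) (x y : Finset α → R) :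
    S.Lw w A B (x + y) = S.Lw w A B x + S.Lw w A B y := by
  unfold Lw
  rw [← Finset.sum_add_distrib]
  refine Finset.sum_congr rfl fun G _ => ?_
  simp only [Pi.add_apply]; ring

lemma Lw_smul (w : Finset α → R) (A B : Finset α) (c : R) (x : Finset α → R) :
    S.Lw w A B (fun F => c * x F) = c * S.Lw w A B x := by
  unfold Lw
  rw [Finset.mul_sum]
  refine Finset.sum_congr rfl fun G _ => ?_
  ring

lemma Lw_sum (w : Finset α → R) (A B : Finset α) {ι : Type*} (s : Finset ι)
    (x : ι → Finset α → R) :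
    S.Lw w A B (fun F => ∑ k ∈ s, x k F) = ∑ k ∈ s, S.Lw w A B (x k) := by
  unfold Lw
  rw [Finset.sum_comm]
  refine Finset.sum_congr rfl fun G _ => ?_
  rw [← Finset.sum_mul, ← Finset.sum_sub_distrib, ← Finset.sum_sub_distrib,
    Finset.sum_mul, ← Finset.sum_sub_distrib, Finset.sum_mul]

lemma Lw_const (w : Finset α → R) (A B : Finset α) (c : R) :
    S.Lw w A B (fun _ => c) = 0 := by
  unfold Lw
  refine Finset.sum_eq_zero fun G _ => ?_
  ring

lemma Lw_congr {w w' : Finset α → R} {A B : Finset α} {x x' : Finset α → R}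
    (hw : ∀ G ∈ S.betw A B, w G = w' G) (hA : x A = x' A) (hB : x B = x' B)
    (hG : ∀ G ∈ S.betw A B, x G = x' G) : S.Lw w A B x = S.Lw w' A B x' := by
  unfold Lw
  refine Finset.sum_congr rfl fun G h => ?_
  rw [hA, hB, hG G h, hw G h]

lemma Lw_chi {w : Finset α → R} {A B : Finset α} (hb : S.Bal w A B) (hAB : A ⊂ B) (i : α) :
    S.Lw w A B (chi R i) = 0 := by
  by_cases hA : i ∈ A
  · rw [← S.Lw_const w A B 1]
    refine S.Lw_congr (fun _ _ => rfl) (chi_mem hA) (chi_mem (hAB.subset hA)) fun G hG => ?_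
    exact chi_mem ((S.mem_betw.1 hG).2.1.subset hA)
  · by_cases hB : i ∈ B
    · rw [S.Lw_eq hb hAB hB hA, chi_not_mem hA, chi_mem hB]
      refine Finset.sum_eq_zero fun G _ => ?_
      ring
    · rw [← S.Lw_const w A B 0]
      refine S.Lw_congr (fun _ _ => rfl) (chi_not_mem hA) (chi_not_mem hB) fun G hG => ?_
      exact chi_not_mem fun h => hB ((S.mem_betw.1 hG).2.2.subset h)

/-- For a vector vanishing at the ends. -/
lemma Lw_zero_ends (w : Finset α → R) {A B : Finset α} {x : Finset α → R} (hA : x A = 0)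
    (hB : x B = 0) : S.Lw w A B x = ∑ G ∈ S.betw A B, x G * w G := by
  unfold Lw
  simp [hA, hB]

variable (V : Finset α → Finset α → R)

noncomputable def U (A B : Finset α) (x : Finset α → R) : R :=
  S.Lw (fun G => V A G * V G B) A B x

noncomputable def n1 (A B : Finset α) (y : Finset α → R) (G : Finset α) : R :=
  S.U V A G y * V G B + V A G * S.U V G B y

noncomputable def U2 (A B : Finset α) (x y : Finset α → R) : R :=
  S.Lw (S.n1 V A B y) A B x

noncomputable def n2 (A B : Finset α) (y z : Finset α → R) (G : Finset α) : R :=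
  S.U2 V A G y z * V G B + S.U V A G y * S.U V G B z + S.U V A G z * S.U V G B y
    + V A G * S.U2 V G B y z

noncomputable def U3 (A B : Finset α) (x y z : Finset α → R) : R :=
  S.Lw (S.n2 V A B y z) A B x

def BalV (A B : Finset α) : Prop := S.Bal (fun G => V A G * V G B) A B

variable {V}

lemma U_eq {A B : Finset α} (hb : S.BalV V A B) (hAB : A ⊂ B) {i : α}
    (hi : i ∈ B) (hi' : i ∉ A) (x : Finset α → R) :
    S.U V A B x =
      ∑ G ∈ S.betw A B, (x G - x A - (x B - x A) * chi R i G) * (V A G * V G B) :=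
  S.Lw_eq hb hAB hi hi' x

/-- If all proper subintervals are balanced, then the first derivative weights are balanced. -/
lemma bal_n1_aux {A B : Finset α} (hl : ∀ G ∈ S.betw A B, S.BalV V A G)
    (hr : ∀ G ∈ S.betw A B, S.BalV V G B) (y : Finset α → R) {i j : α}
    (hi : i ∈ B) (hi' : i ∉ A) (hj : j ∈ B) (hj' : j ∉ A) :
    ∑ G ∈ S.betw A B, (chi R i G - chi R j G) * S.n1 V A B y G = 0 := by
  set c1 : Finset α → Finset α → R := fun H G =>
    chi R i G * (1 - chi R j G) * (y H - y A - (y G - y A) * chi R i H)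
    - chi R j G * (1 - chi R i G) * (y H - y A - (y G - y A) * chi R j H) with hc1
  set c2 : Finset α → Finset α → R := fun H G =>
    chi R i H * (1 - chi R j H) * (y G - y H - (y B - y H) * chi R j G)
    - chi R j H * (1 - chi R i H) * (y G - y H - (y B - y H) * chi R i G) with hc2
  have h1 : ∀ G ∈ S.betw A B, (chi R i G - chi R j G) * S.U V A G y
      = ∑ H ∈ S.betw A G, c1 H G * (V A H * V H G) := by
    intro G hG
    have hAG := (S.mem_betw.1 hG).2.1
    by_cases h : i ∈ G <;> by_cases h' : j ∈ G
    · simp [hc1, chi_mem h, chi_mem h']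
    · rw [S.U_eq (hl G hG) hAG h hi']
      simp [hc1, chi_mem h, chi_not_mem h']
    · rw [S.U_eq (hl G hG) hAG h' hj']
      simp [hc1, chi_mem h', chi_not_mem h]
      rw [← Finset.sum_neg_distrib]
      exact Finset.sum_congr rfl fun _ _ => by ring
    · simp [hc1, chi_not_mem h, chi_not_mem h']
  have h2 : ∀ H ∈ S.betw A B, (chi R i H - chi R j H) * S.U V H B y
      = ∑ G ∈ S.betw H B, c2 H G * (V H G * V G B) := by
    intro H hH
    have hHB := (S.mem_betw.1 hH).2.2
    by_cases h : i ∈ H <;> by_cases h' : j ∈ H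
    · simp [hc2, chi_mem h, chi_mem h']
    · rw [S.U_eq (hr H hH) hHB hj h']
      simp [hc2, chi_mem h, chi_not_mem h']
    · rw [S.U_eq (hr H hH) hHB hi h]
      simp [hc2, chi_mem h', chi_not_mem h]
      rw [← Finset.sum_neg_distrib]
      exact Finset.sum_congr rfl fun _ _ => by ring
    · simp [hc2, chi_not_mem h, chi_not_mem h']
  have e1 : ∑ G ∈ S.betw A B, (chi R i G - chi R j G) * S.n1 V A B y G
      = ∑ G ∈ S.betw A B, ∑ H ∈ S.betw A G, c1 H G * (V A H * V H G * V G B)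
      + ∑ H ∈ S.betw A B, ∑ G ∈ S.betw H B, c2 H G * (V A H * V H G * V G B) := by
    rw [← Finset.sum_add_distrib]
    refine Finset.sum_congr rfl fun G hG => ?_
    have : (chi R i G - chi R j G) * S.n1 V A B y G
      = ((chi R i G - chi R j G) * S.U V A G y) * V G B
        + V A G * ((chi R i G - chi R j G) * S.U V G B y) := by
      unfold n1; ring
    rw [this, h1 G hG, h2 G hG, Finset.sum_mul, Finset.mul_sum]
    congr 1
    · exact Finset.sum_congr rfl fun H _ => by ring
    · exact Finset.sum_congr rfl fun H _ => by ring
  have e2 : ∑ G ∈ S.betw A B, (chi R i G - chi R j G) * S.n1 V A B y G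
      = ∑ G ∈ S.betw A B, ∑ H ∈ S.betw A G,
          (((y G - y B) * (chi R i G * chi R j G) * V G B) *
            ((chi R i H - chi R j H) * (V A H * V H G)))
      + ∑ H ∈ S.betw A B, ∑ G ∈ S.betw H B,
          (((y H - y A) * ((1 - chi R i H) * (1 - chi R j H)) * V A H) *
            ((chi R i G - chi R j G) * (V H G * V G B))) := by
    rw [e1, ← S.sum_swap, ← S.sum_swap, ← Finset.sum_add_distrib, ← Finset.sum_add_distrib]
    refine Finset.sum_congr rfl fun G hG => ?_
    rw [← Finset.sum_add_distrib, ← Finset.sum_add_distrib]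
    refine Finset.sum_congr rfl fun H hH => ?_
    have hHG := (S.mem_betw.1 hH).2.2.subset
    by_cases h : i ∈ H <;> by_cases h' : j ∈ H
    · simp only [hc1, hc2, chi_mem h, chi_mem h', chi_mem (hHG h), chi_mem (hHG h')]; ring
    · by_cases k : j ∈ G
      · simp only [hc1, hc2, chi_mem h, chi_not_mem h', chi_mem (hHG h), chi_mem k]; ring
      · simp only [hc1, hc2, chi_mem h, chi_not_mem h', chi_mem (hHG h), chi_not_mem k]; ring
    · by_cases k : i ∈ G
      · simp only [hc1, hc2, chi_mem h', chi_not_mem h, chi_mem (hHG h'), chi_mem k]; ring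
      · simp only [hc1, hc2, chi_mem h', chi_not_mem h, chi_mem (hHG h'), chi_not_mem k]; ring
    · by_cases k : i ∈ G <;> by_cases k' : j ∈ G
      · simp only [hc1, hc2, chi_not_mem h', chi_not_mem h, chi_mem k, chi_mem k']; ring
      · simp only [hc1, hc2, chi_not_mem h', chi_not_mem h, chi_mem k, chi_not_mem k']; ring
      · simp only [hc1, hc2, chi_not_mem h', chi_not_mem h, chi_not_mem k, chi_mem k']; ring
      · simp only [hc1, hc2, chi_not_mem h', chi_not_mem h, chi_not_mem k, chi_not_mem k']; ring
  rw [e2]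
  have z1 : ∀ G ∈ S.betw A B, ∑ H ∈ S.betw A G,
          (((y G - y B) * (chi R i G * chi R j G) * V G B) *
            ((chi R i H - chi R j H) * (V A H * V H G))) = 0 := by
    intro G hG
    by_cases h : i ∈ G
    · by_cases h' : j ∈ G
      · rw [← Finset.mul_sum]
        have := hl G hG i h hi' j h' hj'
        simp only [sub_mul, Finset.sum_sub_distrib]
        rw [this]; ring
      · simp [chi_not_mem h']
    · simp [chi_not_mem h]
  have z2 : ∀ H ∈ S.betw A B, ∑ G ∈ S.betw H B,
          (((y H - y A) * ((1 - chi R i H) * (1 - chi R j H)) * V A H) *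
            ((chi R i G - chi R j G) * (V H G * V G B))) = 0 := by
    intro G hG
    by_cases h : i ∈ G
    · simp [chi_mem h]
    · by_cases h' : j ∈ G
      · simp [chi_mem h']
      · rw [← Finset.mul_sum]
        have := hr G hG i hi h j hj h'
        simp only [sub_mul, Finset.sum_sub_distrib]
        rw [this]; ring
  rw [Finset.sum_eq_zero z1, Finset.sum_eq_zero z2, add_zero]

lemma bal_n1 {A B : Finset α} (hl : ∀ G ∈ S.betw A B, S.BalV V A G)
    (hr : ∀ G ∈ S.betw A B, S.BalV V G B) (y : Finset α → R) :
    S.Bal (S.n1 V A B y) A B := by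
  intro i hi hi' j hj hj'
  have := S.bal_n1_aux hl hr y hi hi' hj hj'
  simp only [sub_mul, Finset.sum_sub_distrib] at this
  exact sub_eq_zero.1 this

/-- All intervals are balanced. -/
def AllBal (V : Finset α → Finset α → R) : Prop :=
  ∀ A ∈ S.L, ∀ B ∈ S.L, A ⊂ B → S.BalV V A B

lemma AllBal.n1 (h : S.AllBal V) {A B : Finset α} (hA : A ∈ S.L) (hB : B ∈ S.L)
    (y : Finset α → R) : S.Bal (S.n1 V A B y) A B := by
  refine S.bal_n1 (fun G hG => ?_) (fun G hG => ?_) y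
  · have := S.mem_betw.1 hG
    exact h A hA G this.1 this.2.1
  · have := S.mem_betw.1 hG
    exact h G this.1 B hB this.2.2

lemma U_add (A B : Finset α) (x y : Finset α → R) :
    S.U V A B (x + y) = S.U V A B x + S.U V A B y := S.Lw_add _ _ _ _ _

lemma U_smul (A B : Finset α) (c : R) (x : Finset α → R) :
    S.U V A B (fun F => c * x F) = c * S.U V A B x := S.Lw_smul _ _ _ _ _

lemma U2_add_left (A B : Finset α) (x x' y : Finset α → R) :
    S.U2 V A B (x + x') y = S.U2 V A B x y + S.U2 V A B x' y := S.Lw_add _ _ _ _ _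

lemma U2_smul_left (A B : Finset α) (c : R) (x y : Finset α → R) :
    S.U2 V A B (fun F => c * x F) y = c * S.U2 V A B x y := S.Lw_smul _ _ _ _ _

lemma U2_chi_left (h : S.AllBal V) {A B : Finset α} (hA : A ∈ S.L) (hB : B ∈ S.L) (hAB : A ⊂ B)
    (i : α) (y : Finset α → R) : S.U2 V A B (chi R i) y = 0 :=
  S.Lw_chi (AllBal.n1 S h hA hB y) hAB i

lemma U2_const_left (A B : Finset α) (c : R) (y : Finset α → R) :
    S.U2 V A B (fun _ => c) y = 0 := S.Lw_const _ _ _ _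

lemma n1_add (A B : Finset α) (x y : Finset α → R) (G : Finset α) :
    S.n1 V A B (x + y) G = S.n1 V A B x G + S.n1 V A B y G := by
  simp only [n1, U_add]; ring

lemma n1_smul (A B : Finset α) (c : R) (y : Finset α → R) (G : Finset α) :
    S.n1 V A B (fun F => c * y F) G = c * S.n1 V A B y G := by
  simp only [n1, U_smul]; ring

lemma n1_chi (h : S.AllBal V) {A B G : Finset α} (hA : A ∈ S.L) (hB : B ∈ S.L)
    (hG : G ∈ S.betw A B) (i : α) : S.n1 V A B (chi R i) G = 0 := by
  obtain ⟨h1, h2, h3⟩ := S.mem_betw.1 hG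
  have e1 : S.U V A G (chi R i) = 0 := S.Lw_chi (h A hA G h1 h2) h2 i
  have e2 : S.U V G B (chi R i) = 0 := S.Lw_chi (h G h1 B hB h3) h3 i
  simp [n1, e1, e2]

lemma n1_const (A B : Finset α) (c : R) (G : Finset α) : S.n1 V A B (fun _ => c) G = 0 := by
  have e1 : ∀ A B, S.U V A B (fun _ => c) = 0 := fun A B => S.Lw_const _ A B c
  simp [n1, e1]

lemma U2_add_right (A B : Finset α) (x y y' : Finset α → R) :
    S.U2 V A B x (y + y') = S.U2 V A B x y + S.U2 V A B x y' := by
  unfold U2 Lw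
  rw [← Finset.sum_add_distrib]
  exact Finset.sum_congr rfl fun G _ => by rw [n1_add]; ring

lemma U2_smul_right (A B : Finset α) (c : R) (x y : Finset α → R) :
    S.U2 V A B x (fun F => c * y F) = c * S.U2 V A B x y := by
  unfold U2 Lw
  rw [Finset.mul_sum]
  exact Finset.sum_congr rfl fun G _ => by rw [n1_smul]; ring

lemma U2_chi_right (h : S.AllBal V) {A B : Finset α} (hA : A ∈ S.L) (hB : B ∈ S.L)
    (i : α) (x : Finset α → R) : S.U2 V A B x (chi R i) = 0 := by
  unfold U2 Lw
  exact Finset.sum_eq_zero fun G hG => by rw [S.n1_chi h hA hB hG]; ring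

lemma U2_const_right (A B : Finset α) (c : R) (x : Finset α → R) :
    S.U2 V A B x (fun _ => c) = 0 := by
  unfold U2 Lw
  exact Finset.sum_eq_zero fun G hG => by rw [S.n1_const]; ring

/-- diagonal coefficient -/
noncomputable def kap (V : Finset α → Finset α → R) (A B G : Finset α) : R :=
  (∑ H ∈ S.betw A G, pchi R A G H * (V A H * V H G)) * V G B +
  (∑ K ∈ S.betw G B, (1 - pchi R G B K) * (V G K * V K B)) * V A G

/-- explicit formula for vectors vanishing at both ends -/
lemma U2_formula {A B : Finset α} {x y : Finset α → R} (xA : x A = 0) (xB : x B = 0)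
    (yA : y A = 0) (yB : y B = 0) :
    S.U2 V A B x y = ∑ G ∈ S.betw A B, ∑ H ∈ S.betw A G,
      (x G * y H + x H * y G) * (V A H * V H G * V G B)
      - ∑ G ∈ S.betw A B, x G * y G * S.kap V A B G := by
  have e1 : ∑ G ∈ S.betw A B, ∑ H ∈ S.betw A G,
      (x G * y H + x H * y G) * (V A H * V H G * V G B) =
      ∑ G ∈ S.betw A B, ∑ H ∈ S.betw A G, (x G * y H) * (V A H * V H G * V G B)
      + ∑ G ∈ S.betw A B, ∑ K ∈ S.betw G B, (x G * y K) * (V A G * V G K * V K B) := by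
    rw [← S.sum_swap A B (fun G K => (x G * y K) * (V A G * V G K * V K B)),
      ← Finset.sum_add_distrib]
    refine Finset.sum_congr rfl fun G hG => ?_
    rw [← Finset.sum_add_distrib]
    exact Finset.sum_congr rfl fun H hH => by ring
  rw [e1, ← Finset.sum_add_distrib, ← Finset.sum_sub_distrib, U2, S.Lw_zero_ends _ xA xB]
  refine Finset.sum_congr rfl fun G hG => ?_
  unfold n1 U Lw kap
  rw [yA, yB, mul_add, Finset.sum_mul, Finset.sum_mul, Finset.sum_mul, Finset.mul_sum,
    Finset.mul_sum, Finset.mul_sum, mul_add, Finset.mul_sum, Finset.mul_sum]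
  rw [add_sub_add_comm, ← Finset.sum_sub_distrib, ← Finset.sum_sub_distrib]
  congr 1
  · exact Finset.sum_congr rfl fun H hH => by ring
  · exact Finset.sum_congr rfl fun H hH => by ring

lemma U2_symm_zero {A B : Finset α} {x y : Finset α → R} (xA : x A = 0) (xB : x B = 0)
    (yA : y A = 0) (yB : y B = 0) : S.U2 V A B x y = S.U2 V A B y x := by
  rw [S.U2_formula xA xB yA yB, S.U2_formula yA yB xA xB]
  congr 1
  · exact Finset.sum_congr rfl fun G _ => Finset.sum_congr rfl fun H _ => by ring
  · exact Finset.sum_congr rfl fun G _ => by ring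

lemma U2_symm (h : S.AllBal V) {A B : Finset α} (hA : A ∈ S.L) (hB : B ∈ S.L) (hAB : A ⊂ B)
    (x y : Finset α → R) : S.U2 V A B x y = S.U2 V A B y x := by
  obtain ⟨i, hi, hi'⟩ := Finset.exists_of_ssubset hAB
  have key : ∀ x : Finset α → R, ∃ (a b : R) (x' : Finset α → R), x' A = 0 ∧ x' B = 0 ∧
      x = x' + ((fun _ => a) + fun F => b * chi R i F) := by
    intro x
    refine ⟨x A, x B - x A, fun F => x F - x A - (x B - x A) * chi R i F, ?_, ?_, ?_⟩
    · simp [chi_not_mem hi']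
    · simp [chi_mem hi]
    · funext F; simp
  obtain ⟨a, b, x', xA, xB, rfl⟩ := key x
  obtain ⟨a', b', y', yA, yB, rfl⟩ := key y
  simp only [U2_add_left, U2_add_right, U2_smul_left, U2_smul_right, U2_const_left,
    U2_const_right, S.U2_chi_left h hA hB hAB, S.U2_chi_right h hA hB, mul_zero, add_zero]
  exact S.U2_symm_zero xA xB yA yB

end FlatSys
end SWL


namespace SWL
namespace FlatSys

variable {α : Type*} [DecidableEq α] (S : FlatSys α) {R : Type*} [CommRing R]

def lft (x : Finset α → R) (F : Finset α) : DualNumber R := TrivSqZeroExt.inl (x F)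

noncomputable def Vd (V : Finset α → Finset α → R) (z : Finset α → R) (A B : Finset α) :
    DualNumber R := TrivSqZeroExt.inl (V A B) + TrivSqZeroExt.inr (S.U V A B z)

lemma fst_sum' {ι : Type*} (s : Finset ι) (f : ι → DualNumber R) :
    (∑ k ∈ s, f k).fst = ∑ k ∈ s, (f k).fst := by
  exact map_sum (TrivSqZeroExt.fstHom R R R) f s

lemma snd_sum' {ι : Type*} (s : Finset ι) (f : ι → DualNumber R) :
    (∑ k ∈ s, f k).snd = ∑ k ∈ s, (f k).snd := by
  exact map_sum (TrivSqZeroExt.sndHom R R) f s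

lemma chi_fst (i : α) (F : Finset α) : (chi (DualNumber R) i F).fst = chi R i F := by
  unfold chi; split_ifs <;> simp

lemma chi_snd (i : α) (F : Finset α) : (chi (DualNumber R) i F).snd = 0 := by
  unfold chi; split_ifs <;> simp

lemma pchi_fst (A B F : Finset α) : (pchi (DualNumber R) A B F).fst = pchi R A B F := by
  unfold pchi; split <;> simp [chi_fst]

lemma pchi_snd (A B F : Finset α) : (pchi (DualNumber R) A B F).snd = 0 := by
  unfold pchi; split <;> simp [chi_snd]

lemma Lw_fst (w : Finset α → DualNumber R) (A B : Finset α) (x : Finset α → R) :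
    (S.Lw w A B (lft x)).fst = S.Lw (fun G => (w G).fst) A B x := by
  unfold Lw
  rw [fst_sum']
  exact Finset.sum_congr rfl fun G _ => by simp [lft, pchi_fst]

lemma Lw_snd (w : Finset α → DualNumber R) (A B : Finset α) (x : Finset α → R) :
    (S.Lw w A B (lft x)).snd = S.Lw (fun G => (w G).snd) A B x := by
  unfold Lw
  rw [snd_sum']
  exact Finset.sum_congr rfl fun G _ => by simp [lft, pchi_fst, pchi_snd]

variable (V : Finset α → Finset α → R) (z : Finset α → R)

lemma Vd_fst (A B : Finset α) : (S.Vd V z A B).fst = V A B := by simp [Vd]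
lemma Vd_snd (A B : Finset α) : (S.Vd V z A B).snd = S.U V A B z := by simp [Vd]

lemma VVd_fst (A G B : Finset α) : (S.Vd V z A G * S.Vd V z G B).fst = V A G * V G B := by
  simp [Vd_fst]
lemma VVd_snd (A G B : Finset α) : (S.Vd V z A G * S.Vd V z G B).snd = S.n1 V A B z G := by
  simp [Vd_fst, Vd_snd, n1]; ring

lemma Ud_fst (A B : Finset α) (x : Finset α → R) :
    (S.U (S.Vd V z) A B (lft x)).fst = S.U V A B x := by
  unfold U; rw [Lw_fst]; simp only [VVd_fst]

lemma Ud_snd (A B : Finset α) (x : Finset α → R) :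
    (S.U (S.Vd V z) A B (lft x)).snd = S.U2 V A B x z := by
  unfold U U2; rw [Lw_snd]; simp only [VVd_snd]

lemma n1d_fst (A B : Finset α) (y : Finset α → R) (G : Finset α) :
    (S.n1 (S.Vd V z) A B (lft y) G).fst = S.n1 V A B y G := by
  simp [n1, Ud_fst, Vd_fst]

lemma n1d_snd (A B : Finset α) (y : Finset α → R) (G : Finset α) :
    (S.n1 (S.Vd V z) A B (lft y) G).snd = S.n2 V A B y z G := by
  simp [n1, n2, Ud_fst, Vd_fst, Ud_snd, Vd_snd]; ring

lemma U2d_snd (A B : Finset α) (x y : Finset α → R) :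
    (S.U2 (S.Vd V z) A B (lft x) (lft y)).snd = S.U3 V A B x y z := by
  unfold U2 U3; rw [Lw_snd]; simp only [n1d_snd]

variable {V}

lemma AllBal.dual (h : S.AllBal V) : S.AllBal (S.Vd V z) := by
  intro A hA B hB hAB i hi hi' j hj hj'
  ext
  · have := h A hA B hB hAB i hi hi' j hj hj'
    simp only [fst_sum', TrivSqZeroExt.fst_mul, chi_fst, Vd_fst]
    exact this
  · have := AllBal.n1 S h hA hB z i hi hi' j hj hj'
    have e : ∀ k G, (chi (DualNumber R) k G * (S.Vd V z A G * S.Vd V z G B)).snd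
        = chi R k G * S.n1 V A B z G := by
      intro k G
      rw [TrivSqZeroExt.snd_mul, VVd_snd, chi_snd, chi_fst]; simp
    simp only [snd_sum', e]
    exact this

lemma U3_symm (h : S.AllBal V) {A B : Finset α} (hA : A ∈ S.L) (hB : B ∈ S.L) (hAB : A ⊂ B)
    (x y z : Finset α → R) : S.U3 V A B x y z = S.U3 V A B y x z := by
  rw [← U2d_snd, ← U2d_snd, S.U2_symm (AllBal.dual S z h) hA hB hAB]

lemma AllBal.n2 (h : S.AllBal V) {A B : Finset α} (hA : A ∈ S.L) (hB : B ∈ S.L)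
    (y z : Finset α → R) : S.Bal (S.n2 V A B y z) A B := by
  have := AllBal.n1 S (AllBal.dual S z h) hA hB (lft y)
  intro i hi hi' j hj hj'
  have := congrArg TrivSqZeroExt.snd (this i hi hi' j hj hj')
  simpa [snd_sum', n1d_snd, chi_fst, chi_snd] using this

end FlatSys
end SWL


namespace SWL
namespace FlatSys

variable {α : Type*} [DecidableEq α] (S : FlatSys α)

/-- uniform normalisation -/
noncomputable def uhat (x : Finset α → ℝ) (A B G : Finset α) : ℝ :=
  x G - x A - (x B - x A) * (((G.card : ℝ) - A.card) / ((B.card : ℝ) - A.card))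

lemma uhat_left (x : Finset α → ℝ) (A B : Finset α) : uhat x A B A = 0 := by simp [uhat]

lemma card_pos_of_ssubset {A B : Finset α} (h : A ⊂ B) : (0 : ℝ) < (B.card : ℝ) - A.card := by
  have := Finset.card_lt_card h
  rw [sub_pos]; exact_mod_cast this

lemma uhat_right (x : Finset α → ℝ) {A B : Finset α} (h : A ⊂ B) : uhat x A B B = 0 := by
  have := (card_pos_of_ssubset h).ne'
  simp [uhat, div_self this]

lemma card_eq_sum_chi {A G B : Finset α} (hA : A ⊆ G) (hB : G ⊆ B) :
    ((G.card : ℝ) - A.card) = ∑ k ∈ B \ A, chi ℝ k G := by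
  unfold chi
  rw [Finset.sum_ite_mem, Finset.sum_const, nsmul_eq_mul, mul_one]
  have : (B \ A) ∩ G = G \ A := by
    ext k; simp only [Finset.mem_inter, Finset.mem_sdiff]
    constructor
    · rintro ⟨⟨_, h⟩, h'⟩; exact ⟨h', h⟩
    · rintro ⟨h, h'⟩; exact ⟨⟨hB h, h'⟩, h⟩
  rw [this, Finset.card_sdiff_of_subset hA, Nat.cast_sub (Finset.card_le_card hA)]

lemma Lw_uhat {w : Finset α → ℝ} {A B : Finset α} (hb : S.Bal w A B) (hAB : A ⊂ B)
    (x : Finset α → ℝ) : S.Lw w A B x = ∑ G ∈ S.betw A B, uhat x A B G * w G := by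
  obtain ⟨j, hj, hj'⟩ := Finset.exists_of_ssubset hAB
  rw [S.Lw_eq hb hAB hj hj']
  simp only [uhat, sub_mul _ ((x B - x A) * _), Finset.sum_sub_distrib, mul_assoc, ← Finset.mul_sum]
  congr 2
  have hpos := card_pos_of_ssubset hAB
  have e : ∀ G ∈ S.betw A B, ((G.card : ℝ) - A.card) / ((B.card : ℝ) - A.card) * w G
      = (∑ k ∈ B \ A, chi ℝ k G * w G) / ((B.card : ℝ) - A.card) := by
    intro G hG
    obtain ⟨_, h2, h3⟩ := S.mem_betw.1 hG
    rw [card_eq_sum_chi h2.subset h3.subset, ← Finset.sum_mul]; ring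
  rw [Finset.sum_congr rfl e, ← Finset.sum_div, Finset.sum_comm, eq_div_iff hpos.ne']
  have e2 : ∀ k ∈ B \ A, ∑ G ∈ S.betw A B, chi ℝ k G * w G = ∑ G ∈ S.betw A B, chi ℝ j G * w G := by
    intro k hk
    rw [Finset.mem_sdiff] at hk
    exact hb k hk.1 hk.2 j hj hj'
  rw [Finset.sum_congr rfl e2, Finset.sum_const, nsmul_eq_mul, Finset.card_sdiff_of_subset hAB.subset,
    Nat.cast_sub (Finset.card_le_card hAB.subset)]
  ring

lemma Lw_uhat' {w : Finset α → ℝ} {A B : Finset α} (hb : S.Bal w A B) (hAB : A ⊂ B)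
    (x : Finset α → ℝ) : S.Lw w A B (uhat x A B) = S.Lw w A B x := by
  rw [S.Lw_uhat hb hAB x, S.Lw_zero_ends _ (uhat_left x A B) (uhat_right x hAB)]

noncomputable def Vol (l : Finset α → ℝ) (A B : Finset α) : ℝ :=
  if S.rk B ≤ S.rk A + 1 then 1 else
    (∑ G ∈ (S.betw A B).attach, uhat l A B G * (Vol l A G * Vol l G B)) /
      ((S.rk B : ℝ) - S.rk A - 1)
termination_by B.card - A.card
decreasing_by
  · have := S.mem_betw.1 G.2
    have h1 := Finset.card_lt_card this.2.1
    have h2 := Finset.card_lt_card this.2.2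
    omega
  · have := S.mem_betw.1 G.2
    have h1 := Finset.card_lt_card this.2.1
    have h2 := Finset.card_lt_card this.2.2
    omega

variable (l : Finset α → ℝ)

lemma Vol_cover {A B : Finset α} (h : S.rk B = S.rk A + 1) : S.Vol l A B = 1 := by
  rw [Vol, if_pos h.le]

lemma betw_cover {A B : Finset α} (hA : A ∈ S.L) (hB : B ∈ S.L) (h : S.rk B ≤ S.rk A + 1) :
    S.betw A B = ∅ := by
  rw [Finset.eq_empty_iff_forall_notMem]
  intro G hG
  obtain ⟨h1, h2, h3⟩ := S.mem_betw.1 hG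
  have := S.rk_lt A hA G h1 h2
  have := S.rk_lt G h1 B hB h3
  omega

lemma Vol_rec {A B : Finset α} (h : S.rk A + 1 < S.rk B) :
    S.Vol l A B = (∑ G ∈ S.betw A B, uhat l A B G * (S.Vol l A G * S.Vol l G B)) /
      ((S.rk B : ℝ) - S.rk A - 1) := by
  rw [Vol, if_neg (by omega)]
  rw [Finset.sum_attach (S.betw A B) (fun G => uhat l A B G * (S.Vol l A G * S.Vol l G B))]

lemma Vol_euler {A B : Finset α} (hA : A ∈ S.L) (hB : B ∈ S.L) (hAB : A ⊂ B) :
    ∑ G ∈ S.betw A B, uhat l A B G * (S.Vol l A G * S.Vol l G B)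
      = ((S.rk B : ℝ) - S.rk A - 1) * S.Vol l A B := by
  have hlt := S.rk_lt A hA B hB hAB
  by_cases h : S.rk B = S.rk A + 1
  · rw [S.betw_cover hA hB h.le, h]; simp
  · have h' : S.rk A + 1 < S.rk B := by omega
    have : (S.rk B : ℝ) - S.rk A - 1 ≠ 0 := by
      have : (S.rk A : ℝ) + 1 < S.rk B := by exact_mod_cast h'
      linarith
    rw [S.Vol_rec l h', mul_div_cancel₀ _ this]

lemma U_euler {A B : Finset α} (hA : A ∈ S.L) (hB : B ∈ S.L) (hAB : A ⊂ B)
    (hb : S.BalV (S.Vol l) A B) :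
    S.U (S.Vol l) A B l = ((S.rk B : ℝ) - S.rk A - 1) * S.Vol l A B := by
  rw [← S.Vol_euler l hA hB hAB, U, S.Lw_uhat hb hAB]

lemma sum_rank2 {A B : Finset α} (hA : A ∈ S.L) (hB : B ∈ S.L) (hAB : A ⊂ B)
    (h : S.rk B = S.rk A + 2) {i : α} (hi : i ∈ B) (hi' : i ∉ A) :
    ∑ G ∈ S.betw A B, chi ℝ i G * (S.Vol l A G * S.Vol l G B) = 1 := by
  obtain ⟨G, hG, h1, h2, h3, h4⟩ := S.cov A hA B hB hAB i hi hi'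
  have h5 : G ⊂ B := by
    refine Finset.ssubset_iff_subset_ne.2 ⟨h2, ?_⟩
    rintro rfl; omega
  rw [Finset.sum_eq_single G]
  · rw [chi_mem h3, S.Vol_cover l h4, S.Vol_cover l (by omega)]; ring
  · intro H hH hne
    obtain ⟨k1, k2, k3⟩ := S.mem_betw.1 hH
    rw [chi_not_mem, zero_mul]
    intro hiH
    apply hne
    have := S.rk_lt A hA H k1 k2
    have := S.rk_lt H k1 B hB k3
    exact S.cov_unique A hA H k1 G hG k2 h1 (by omega) h4 i hiH h3 hi'
  · intro hn
    exact absurd (S.mem_betw.2 ⟨hG, h1, h5⟩) hn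

lemma allBal_aux (n : ℕ) : ∀ A ∈ S.L, ∀ B ∈ S.L, A ⊂ B → S.rk B ≤ S.rk A + n →
    S.BalV (S.Vol l) A B := by
  induction n with
  | zero =>
    intro A hA B hB hAB h
    have := S.rk_lt A hA B hB hAB
    omega
  | succ n ih =>
    intro A hA B hB hAB h
    have hlt := S.rk_lt A hA B hB hAB
    intro i hi hi' j hj hj'
    rcases (show S.rk B = S.rk A + 1 ∨ S.rk B = S.rk A + 2 ∨ S.rk A + 2 < S.rk B by omega) with
      h1 | h2 | h3
    · simp [S.betw_cover hA hB h1.le]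
    · rw [S.sum_rank2 l hA hB hAB h2 hi hi', S.sum_rank2 l hA hB hAB h2 hj hj']
    · have hl : ∀ G ∈ S.betw A B, S.BalV (S.Vol l) A G := by
        intro G hG
        obtain ⟨k1, k2, k3⟩ := S.mem_betw.1 hG
        have := S.rk_lt G k1 B hB k3
        exact ih A hA G k1 k2 (by omega)
      have hr : ∀ G ∈ S.betw A B, S.BalV (S.Vol l) G B := by
        intro G hG
        obtain ⟨k1, k2, k3⟩ := S.mem_betw.1 hG
        have := S.rk_lt A hA G k1 k2
        exact ih G k1 B hB k3 (by omega)
      have key := S.bal_n1_aux hl hr l hi hi' hj hj'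
      have e : ∀ G ∈ S.betw A B, (chi ℝ i G - chi ℝ j G) * S.n1 (S.Vol l) A B l G
          = ((S.rk B : ℝ) - S.rk A - 2) * ((chi ℝ i G - chi ℝ j G) * (S.Vol l A G * S.Vol l G B)) := by
        intro G hG
        obtain ⟨k1, k2, k3⟩ := S.mem_betw.1 hG
        rw [n1, S.U_euler l hA k1 k2 (hl G hG), S.U_euler l k1 hB k3 (hr G hG)]
        ring
      rw [Finset.sum_congr rfl e, ← Finset.mul_sum] at key
      have hne : (S.rk B : ℝ) - S.rk A - 2 ≠ 0 := by
        have : (S.rk A : ℝ) + 2 < S.rk B := by exact_mod_cast h3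
        linarith
      have key2 := (mul_eq_zero.1 key).resolve_left hne
      simp only [sub_mul, Finset.sum_sub_distrib] at key2
      exact sub_eq_zero.1 key2

lemma allBal : S.AllBal (S.Vol l) := fun A hA B hB hAB =>
  S.allBal_aux l (S.rk B) A hA B hB hAB (by omega)

/-- positivity hypothesis on `l` -/
def Pos : Prop := ∀ A ∈ S.L, ∀ B ∈ S.L, ∀ G ∈ S.L, A ⊂ G → G ⊂ B → 0 < uhat l A B G

lemma exists_betw {A B : Finset α} (hA : A ∈ S.L) (hB : B ∈ S.L) (hAB : A ⊂ B)
    (h : S.rk A + 1 < S.rk B) : (S.betw A B).Nonempty := by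
  obtain ⟨i, hi, hi'⟩ := Finset.exists_of_ssubset hAB
  obtain ⟨G, hG, h1, h2, h3, h4⟩ := S.cov A hA B hB hAB i hi hi'
  refine ⟨G, S.mem_betw.2 ⟨hG, h1, Finset.ssubset_iff_subset_ne.2 ⟨h2, ?_⟩⟩⟩
  rintro rfl; omega

lemma Vol_pos_aux (hp : S.Pos l) (n : ℕ) : ∀ A ∈ S.L, ∀ B ∈ S.L, A ⊂ B → S.rk B ≤ S.rk A + n →
    0 < S.Vol l A B := by
  induction n with
  | zero =>
    intro A hA B hB hAB h
    have := S.rk_lt A hA B hB hAB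
    omega
  | succ n ih =>
    intro A hA B hB hAB h
    have hlt := S.rk_lt A hA B hB hAB
    by_cases h1 : S.rk B = S.rk A + 1
    · rw [S.Vol_cover l h1]; exact one_pos
    · have h' : S.rk A + 1 < S.rk B := by omega
      rw [S.Vol_rec l h']
      apply div_pos
      · refine Finset.sum_pos (fun G hG => ?_) (S.exists_betw hA hB hAB h')
        obtain ⟨k1, k2, k3⟩ := S.mem_betw.1 hG
        have := S.rk_lt G k1 B hB k3
        have := S.rk_lt A hA G k1 k2
        exact mul_pos (hp A hA B hB G k1 k2 k3)
          (mul_pos (ih A hA G k1 k2 (by omega)) (ih G k1 B hB k3 (by omega)))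
      · have : (S.rk A : ℝ) + 1 < S.rk B := by exact_mod_cast h'
        linarith

lemma Vol_pos (hp : S.Pos l) {A B : Finset α} (hA : A ∈ S.L) (hB : B ∈ S.L) (hAB : A ⊂ B) :
    0 < S.Vol l A B := S.Vol_pos_aux l hp (S.rk B) A hA B hB hAB (by omega)

lemma n1_euler {A B G : Finset α} (hA : A ∈ S.L) (hB : B ∈ S.L) (hG : G ∈ S.betw A B) :
    S.n1 (S.Vol l) A B l G = ((S.rk B : ℝ) - S.rk A - 2) * (S.Vol l A G * S.Vol l G B) := by
  obtain ⟨k1, k2, k3⟩ := S.mem_betw.1 hG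
  rw [n1, S.U_euler l hA k1 k2 (S.allBal l A hA G k1 k2),
    S.U_euler l k1 hB k3 (S.allBal l G k1 B hB k3)]
  ring

lemma U2_euler {A B : Finset α} (hA : A ∈ S.L) (hB : B ∈ S.L) (x : Finset α → ℝ) :
    S.U2 (S.Vol l) A B x l = ((S.rk B : ℝ) - S.rk A - 2) * S.U (S.Vol l) A B x := by
  unfold U2 U Lw
  rw [Finset.mul_sum]
  refine Finset.sum_congr rfl fun G hG => ?_
  rw [S.n1_euler l hA hB hG]; ring

lemma n2_euler {A B G : Finset α} (hA : A ∈ S.L) (hB : B ∈ S.L) (hG : G ∈ S.betw A B)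
    (x : Finset α → ℝ) :
    S.n2 (S.Vol l) A B x l G = ((S.rk B : ℝ) - S.rk A - 3) * S.n1 (S.Vol l) A B x G := by
  obtain ⟨k1, k2, k3⟩ := S.mem_betw.1 hG
  rw [n2, n1, S.U_euler l hA k1 k2 (S.allBal l A hA G k1 k2),
    S.U_euler l k1 hB k3 (S.allBal l G k1 B hB k3), S.U2_euler l hA k1, S.U2_euler l k1 hB]
  ring

/-- Bochner-type identity. -/
lemma bochner {A B : Finset α} (hA : A ∈ S.L) (hB : B ∈ S.L) (hAB : A ⊂ B) (x : Finset α → ℝ) :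
    ((S.rk B : ℝ) - S.rk A - 3) * S.U2 (S.Vol l) A B x x
      = ∑ G ∈ S.betw A B, uhat l A B G * S.n2 (S.Vol l) A B x x G := by
  have hb := S.allBal l
  rw [← S.Lw_uhat (AllBal.n2 S hb hA hB x x) hAB l]
  change _ = S.U3 (S.Vol l) A B l x x
  rw [S.U3_symm hb hA hB hAB]
  have : S.U3 (S.Vol l) A B x l x = S.U3 (S.Vol l) A B x x l := by
    unfold U3
    refine S.Lw_congr (fun G hG => ?_) rfl rfl fun _ _ => rfl
    obtain ⟨k1, k2, k3⟩ := S.mem_betw.1 hG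
    unfold n2
    rw [S.U2_symm hb hA k1 k2 l x, S.U2_symm hb k1 hB k3 l x]
    ring
  rw [this]
  unfold U3 U2 Lw
  rw [Finset.mul_sum]
  refine Finset.sum_congr rfl fun G hG => ?_
  rw [S.n2_euler l hA hB hG]; ring

end FlatSys
end SWL


namespace SWL

lemma rev_cs {xx xl ll p q : ℝ} (hll : 0 < ll) (hq : q ≠ 0)
    (h : q ^ 2 * xx - 2 * p * q * xl + p ^ 2 * ll ≤ 0) : xx * ll ≤ xl ^ 2 := by
  have hq2 : 0 < q ^ 2 := by positivity
  have h1 : q ^ 2 * (xx * ll) ≤ q ^ 2 * xl ^ 2 := by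
    nlinarith [mul_le_mul_of_nonneg_right h hll.le, sq_nonneg (p * ll - q * xl)]
  exact le_of_mul_le_mul_left h1 hq2

lemma prod_ineq {m n f g f1 g1 f2 g2 : ℝ} (hm : 0 ≤ m) (hn : 0 ≤ n)
    (hf : f2 * (m * f) ≤ (m - 1) * f1 ^ 2) (hg : g2 * (n * g) ≤ (n - 1) * g1 ^ 2)
    (hm0 : m = 0 → f1 = 0 ∧ f2 = 0) (hn0 : n = 0 → g1 = 0 ∧ g2 = 0) :
    (f2 * g + f1 * g1 + f1 * g1 + f * g2) * ((m + n) * (f * g)) ≤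
      (m + n - 1) * (f1 * g + f * g1) ^ 2 := by
  rcases hm.eq_or_lt with h | hm
  · obtain ⟨rfl, rfl⟩ := hm0 h.symm
    subst h
    nlinarith [mul_le_mul_of_nonneg_left hg (sq_nonneg f)]
  rcases hn.eq_or_lt with h | hn
  · obtain ⟨rfl, rfl⟩ := hn0 h.symm
    subst h
    nlinarith [mul_le_mul_of_nonneg_left hf (sq_nonneg g)]
  have h1 : g ^ 2 * n * (m + n) * (f2 * (m * f)) ≤ g ^ 2 * n * (m + n) * ((m - 1) * f1 ^ 2) :=
    mul_le_mul_of_nonneg_left hf (by positivity)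
  have h2 : f ^ 2 * m * (m + n) * (g2 * (n * g)) ≤ f ^ 2 * m * (m + n) * ((n - 1) * g1 ^ 2) :=
    mul_le_mul_of_nonneg_left hg (by positivity)
  have hmn : 0 < m * n := mul_pos hm hn
  refine le_of_mul_le_mul_left ?_ hmn
  nlinarith [sq_nonneg (n * (f1 * g) - m * (f * g1))]

/-- Bochner method in finite dimensions. -/
lemma bochner_linear {ι : Type*} [Fintype ι] [DecidableEq ι] (Q : ι → ι → ℝ)
    (hs : ∀ a b, Q a b = Q b a) (hnn : ∀ a b, a ≠ b → 0 ≤ Q a b) (l : ι → ℝ) (hl : ∀ a, 0 < l a)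
    (hc : ∀ a, 0 < ∑ b, Q a b * l b)
    (hB : ∀ x : ι → ℝ, ∑ a, x a * ∑ b, Q a b * x b ≤
      ∑ a, l a * (∑ b, Q a b * x b) ^ 2 / (∑ b, Q a b * l b))
    (hconn : ∀ f : ι → ℝ, (∀ a b, a ≠ b → 0 < Q a b → f a = f b) → ∀ a b, f a = f b)
    (x : ι → ℝ) (hx : ∑ a, (∑ b, Q a b * l b) * x a = 0) :
    ∑ a, x a * ∑ b, Q a b * x b ≤ 0 := by
  classical
  set c : ι → ℝ := fun a => ∑ b, Q a b * l b with hcdef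
  have hc : ∀ a, 0 < c a := hc
  set s : ι → ℝ := fun a => Real.sqrt (l a / c a) with hsdef
  have spos : ∀ a, 0 < s a := fun a => Real.sqrt_pos.2 (div_pos (hl a) (hc a))
  have ssq : ∀ a, s a ^ 2 = l a / c a := fun a => Real.sq_sqrt (div_pos (hl a) (hc a)).le
  -- Dirichlet form
  have hdir : ∀ x : ι → ℝ, ∑ a, c a / l a * x a ^ 2 - ∑ a, x a * ∑ b, Q a b * x b
      = (1 / 2) * ∑ a, ∑ b, Q a b * (l a * l b * (x a / l a - x b / l b) ^ 2) := by
    intro x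
    have e1 : ∀ a b, Q a b * (l a * l b * (x a / l a - x b / l b) ^ 2)
        = Q a b * l b * (x a ^ 2 / l a) + Q b a * l a * (x b ^ 2 / l b)
          - 2 * (x a * (Q a b * x b)) := by
      intro a b
      have := (hl a).ne'
      have := (hl b).ne'
      rw [hs b a]
      field_simp
      ring
    simp only [e1, Finset.sum_sub_distrib, Finset.sum_add_distrib]
    have e2 : ∑ a, ∑ b, Q b a * l a * (x b ^ 2 / l b) = ∑ a, ∑ b, Q a b * l b * (x a ^ 2 / l a) :=
      Finset.sum_comm
    have e3 : ∑ a, ∑ b, Q a b * l b * (x a ^ 2 / l a) = ∑ a, c a / l a * x a ^ 2 := by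
      refine Finset.sum_congr rfl fun a _ => ?_
      rw [← Finset.sum_mul]; simp only [hcdef]; ring
    rw [e2, e3]
    simp only [← Finset.mul_sum]
    ring
  set B : Matrix ι ι ℝ := fun a b => s a * Q a b * s b with hBdef
  have hBH : B.IsHermitian := by
    ext a b
    change s b * Q b a * s a = s a * Q a b * s b
    rw [hs a b]; ring
  set T := Matrix.toEuclideanLin B with hT
  have hTs : T.IsSymmetric := Matrix.isSymmetric_toEuclideanLin_iff.2 hBH
  have hTapp : ∀ (v : EuclideanSpace ℝ ι) a, T v a = s a * ∑ b, Q a b * (s b * v b) := by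
    intro v a
    change ∑ b, s a * Q a b * s b * v b = _
    rw [Finset.mul_sum]
    exact Finset.sum_congr rfl fun b _ => by ring
  set n := Module.finrank ℝ (EuclideanSpace ℝ ι) with hn
  set bs := hTs.eigenvectorBasis hn.symm with hbs
  set ev := hTs.eigenvalues hn.symm with hev
  have hinner : ∀ u v : EuclideanSpace ℝ ι, inner ℝ u v = ∑ a, u a * v a := by
    intro u v
    rw [PiLp.inner_apply]
    exact Finset.sum_congr rfl fun a _ => by simp [mul_comm]
  have hTin : ∀ u v : EuclideanSpace ℝ ι, inner ℝ u (T v)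
      = ∑ a, (s a * u a) * ∑ b, Q a b * (s b * v b) := by
    intro u v
    rw [hinner]
    exact Finset.sum_congr rfl fun a _ => by rw [hTapp]; ring
  -- eigenvalue analysis
  have hkey : ∀ k, ev k ≤ 0 ∨ ∃ t : ℝ, ∀ a, s a * bs k a = t * l a := by
    intro k
    have hTk : T (bs k) = (ev k : ℝ) • bs k := by
      exact hTs.apply_eigenvectorBasis hn.symm k
    have hnorm : ∑ a, bs k a * bs k a = 1 := by
      rw [← hinner, real_inner_self_eq_norm_sq, bs.orthonormal.1 k]; norm_num
    set y : ι → ℝ := fun a => s a * bs k a with hy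
    have hQy : ∀ a, s a * ∑ b, Q a b * y b = ev k * bs k a := by
      intro a
      rw [← hTapp, hTk]; simp
    have hyQy : ∑ a, y a * ∑ b, Q a b * y b = ev k := by
      rw [← hTin (bs k) (bs k), hTk, inner_smul_right, hinner, hnorm, mul_one]
    have hB1 := hB y
    have hB2 : ∑ a, l a * (∑ b, Q a b * y b) ^ 2 / c a = ev k ^ 2 := by
      have : ∀ a, l a * (∑ b, Q a b * y b) ^ 2 / c a = ev k ^ 2 * (bs k a * bs k a) := by
        intro a
        have e : l a * (∑ b, Q a b * y b) ^ 2 / c a = (s a * ∑ b, Q a b * y b) ^ 2 := by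
          rw [mul_pow, ssq]; ring
        rw [e, hQy]; ring
      rw [Finset.sum_congr rfl fun a _ => this a, ← Finset.mul_sum, hnorm, mul_one]
    rw [hyQy, hB2] at hB1
    have hD : ∑ a, c a / l a * y a ^ 2 = 1 := by
      rw [← hnorm]
      refine Finset.sum_congr rfl fun a _ => ?_
      have h1 := (hl a).ne'
      have h2 := (hc a).ne'
      rw [hy, mul_pow, ssq]
      field_simp
    have hd := hdir y
    rw [hD, hyQy] at hd
    have hterm : ∀ a b, 0 ≤ Q a b * (l a * l b * (y a / l a - y b / l b) ^ 2) := by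
      intro a b
      by_cases hab : a = b
      · subst hab; simp
      · have := hl a
        have := hl b
        exact mul_nonneg (hnn a b hab) (by positivity)
    by_cases h0 : ev k ≤ 0
    · exact Or.inl h0
    right
    push Not at h0
    have h1 : 1 ≤ ev k := by nlinarith
    have hsum0 : ∑ a, ∑ b, Q a b * (l a * l b * (y a / l a - y b / l b) ^ 2) = 0 := by
      have : 0 ≤ ∑ a, ∑ b, Q a b * (l a * l b * (y a / l a - y b / l b) ^ 2) :=
        Finset.sum_nonneg fun a _ => Finset.sum_nonneg fun b _ => hterm a b
      linarith
    have hconst := hconn (fun a => y a / l a) (by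
      intro a b hab hQ
      have h2 := (Finset.sum_eq_zero_iff_of_nonneg (fun a _ => Finset.sum_nonneg fun b _ => hterm a b)).1
        hsum0 a (Finset.mem_univ a)
      have h3 := (Finset.sum_eq_zero_iff_of_nonneg (fun b _ => hterm a b)).1 h2 b (Finset.mem_univ b)
      have hla := hl a
      have hlb := hl b
      have h4 := (mul_eq_zero.1 h3).resolve_left hQ.ne'
      have h5 := (mul_eq_zero.1 h4).resolve_left (by positivity)
      have h6 := pow_eq_zero_iff (two_ne_zero) |>.1 h5
      exact sub_eq_zero.1 h6)
    by_cases hne : Nonempty ι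
    · obtain ⟨a0⟩ := hne
      refine ⟨y a0 / l a0, fun a => ?_⟩
      rw [← hconst a a0, div_mul_cancel₀ _ (hl a).ne']
    · exact ⟨0, fun a => absurd ⟨a⟩ hne⟩
  set u : EuclideanSpace ℝ ι := WithLp.toLp 2 (fun a => x a / s a) with hu
  have hua : ∀ a, s a * u a = x a := by
    intro a
    simp only [hu]
    exact mul_div_cancel₀ _ (spos a).ne'
  have e1 : ∑ a, x a * ∑ b, Q a b * x b = inner ℝ u (T u) := by
    rw [hTin]; simp only [hua]
  rw [e1, ← bs.sum_inner_mul_inner u (T u)]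
  refine Finset.sum_nonpos fun k _ => ?_
  have e2 : inner ℝ (bs k) (T u) = ev k * inner ℝ (bs k) u := by
    rw [← hTs (bs k) u]
    have hTk : T (bs k) = (ev k : ℝ) • bs k := hTs.apply_eigenvectorBasis hn.symm k
    rw [hTk, inner_smul_left]; simp
  rw [e2, real_inner_comm (bs k) u]
  rcases hkey k with h | ⟨t, ht⟩
  · nlinarith [mul_self_nonneg (inner ℝ (bs k) u : ℝ)]
  · have : inner ℝ (bs k) u = 0 := by
      rw [hinner]
      have : ∀ a, bs k a * u a = t * (c a * x a) := by
        intro a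
        have hsa := (spos a).ne'
        have h1 : bs k a = t * l a / s a := by rw [← ht a]; field_simp
        have h2 : u a = x a / s a := by rw [← hua a]; field_simp
        have h3 : l a = s a ^ 2 * c a := by rw [ssq, div_mul_cancel₀ _ (hc a).ne']
        rw [h1, h2, h3]; field_simp
      rw [Finset.sum_congr rfl fun a _ => this a, ← Finset.mul_sum, hx, mul_zero]
    rw [this]; simp

end SWL


namespace SWL
namespace FlatSys

variable {α : Type*} [DecidableEq α] (S : FlatSys α)

def ee (H F : Finset α) : ℝ := if F = H then 1 else 0

lemma ee_self (H : Finset α) : ee H H = 1 := by simp [ee]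
lemma ee_ne {H F : Finset α} (h : F ≠ H) : ee H F = 0 := by simp [ee, h]

variable (V : Finset α → Finset α → ℝ)

lemma n1_congr {A B G : Finset α} (hG : G ∈ S.betw A B) {y y' : Finset α → ℝ}
    (hA : y A = y' A) (hB : y B = y' B) (h : ∀ H ∈ S.betw A B, y H = y' H) :
    S.n1 V A B y G = S.n1 V A B y' G := by
  obtain ⟨k1, k2, k3⟩ := S.mem_betw.1 hG
  unfold n1 U
  rw [S.Lw_congr (fun _ _ => rfl) hA (h G hG) fun H hH => ?_,
    S.Lw_congr (x := y) (x' := y') (fun _ _ => rfl) (h G hG) hB fun H hH => ?_]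
  · obtain ⟨j1, j2, j3⟩ := S.mem_betw.1 hH
    exact h H (S.mem_betw.2 ⟨j1, k2.trans j2, j3⟩)
  · obtain ⟨j1, j2, j3⟩ := S.mem_betw.1 hH
    exact h H (S.mem_betw.2 ⟨j1, j2, j3.trans k3⟩)

lemma n1_sum (A B G : Finset α) {ι : Type*} (s : Finset ι) (y : ι → Finset α → ℝ) :
    S.n1 V A B (fun F => ∑ k ∈ s, y k F) G = ∑ k ∈ s, S.n1 V A B (y k) G := by
  unfold n1 U
  rw [S.Lw_sum, S.Lw_sum, Finset.sum_mul, Finset.mul_sum, ← Finset.sum_add_distrib]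

lemma n1_expand {A B G : Finset α} (hG : G ∈ S.betw A B) {y : Finset α → ℝ}
    (hA : y A = 0) (hB : y B = 0) :
    S.n1 V A B y G = ∑ H ∈ S.betw A B, S.n1 V A B (ee H) G * y H := by
  have e : S.n1 V A B y G = S.n1 V A B (fun F => ∑ H ∈ S.betw A B, y H * ee H F) G := by
    refine S.n1_congr V hG ?_ ?_ ?_
    · rw [hA]; symm
      refine Finset.sum_eq_zero fun H hH => ?_
      rw [ee_ne, mul_zero]
      rintro rfl
      exact (S.mem_betw.1 hH).2.1.ne rfl
    · rw [hB]; symm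
      refine Finset.sum_eq_zero fun H hH => ?_
      rw [ee_ne, mul_zero]
      rintro rfl
      exact (S.mem_betw.1 hH).2.2.ne rfl
    · intro K hK
      rw [Finset.sum_eq_single K]
      · simp [ee_self]
      · intro H _ hne
        rw [ee_ne hne.symm, mul_zero]
      · intro h; exact absurd hK h
  rw [e, S.n1_sum V A B G (S.betw A B) (fun H F => y H * ee H F)]
  refine Finset.sum_congr rfl fun H _ => ?_
  rw [S.n1_smul]; ring

lemma U_ee {A B H : Finset α} (hH : H ∈ S.L) (hA : H ≠ A) (hB : H ≠ B) :
    S.U V A B (ee H) = if A ⊂ H ∧ H ⊂ B then V A H * V H B else 0 := by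
  unfold U
  rw [S.Lw_zero_ends _ (ee_ne hA.symm) (ee_ne hB.symm)]
  split_ifs with h
  · rw [Finset.sum_eq_single H]
    · rw [ee_self, one_mul]
    · intro K _ hne
      rw [ee_ne hne, zero_mul]
    · intro hn; exact absurd (S.mem_betw.2 ⟨hH, h⟩) hn
  · refine Finset.sum_eq_zero fun K hK => ?_
    rw [ee_ne, zero_mul]
    rintro rfl
    exact h (S.mem_betw.1 hK).2

lemma n1_ee {A B G H : Finset α} (hG : G ∈ S.betw A B) (hH : H ∈ S.betw A B) (hne : G ≠ H) :
    S.n1 V A B (ee H) G = (if H ⊂ G then V A H * V H G * V G B else 0)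
      + (if G ⊂ H then V A G * V G H * V H B else 0) := by
  obtain ⟨k1, k2, k3⟩ := S.mem_betw.1 hG
  obtain ⟨j1, j2, j3⟩ := S.mem_betw.1 hH
  unfold n1
  rw [S.U_ee V j1 j2.ne' hne.symm, S.U_ee V j1 hne.symm j3.ne]
  simp only [j2, j3, true_and, and_true]
  split_ifs <;> ring

lemma U2_ee {A B G : Finset α} (hG : G ∈ S.betw A B) (y : Finset α → ℝ) :
    S.U2 V A B (ee G) y = S.n1 V A B y G := by
  obtain ⟨k1, k2, k3⟩ := S.mem_betw.1 hG
  unfold U2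
  rw [S.Lw_zero_ends _ (ee_ne k2.ne) (ee_ne k3.ne'), Finset.sum_eq_single G]
  · rw [ee_self, one_mul]
  · intro K _ hne
    rw [ee_ne hne, zero_mul]
  · intro hn; exact absurd hG hn

variable {V}

/-- from negativity on a hyperplane to the reversed Cauchy-Schwarz inequality -/
lemma lorentz_of_neg (l : Finset α → ℝ) (hp : S.Pos l) {A B : Finset α} (hA : A ∈ S.L)
    (hB : B ∈ S.L) (hAB : A ⊂ B) (hr : S.rk A + 2 < S.rk B) (φ : (Finset α → ℝ) → ℝ)
    (hφ : ∀ (a b : ℝ) x y, φ (fun F => a * x F + b * y F) = a * φ x + b * φ y)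
    (hneg : ∀ x : Finset α → ℝ, x A = 0 → x B = 0 → φ x = 0 → S.U2 (S.Vol l) A B x x ≤ 0)
    (x : Finset α → ℝ) :
    S.U2 (S.Vol l) A B x x * (((S.rk B : ℝ) - S.rk A - 1) * S.Vol l A B) ≤
      ((S.rk B : ℝ) - S.rk A - 2) * S.U (S.Vol l) A B x ^ 2 := by
  have hb := S.allBal l
  have hr' : (S.rk A : ℝ) + 2 < S.rk B := by exact_mod_cast hr
  have hV := S.Vol_pos l hp hA hB hAB
  set x' := uhat x A B with hx'
  set l' := uhat l A B with hl'
  have red : ∀ y z, S.U2 (S.Vol l) A B (uhat y A B) (uhat z A B) = S.U2 (S.Vol l) A B y z := by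
    intro y z
    have h1 : ∀ y z, S.U2 (S.Vol l) A B (uhat y A B) z = S.U2 (S.Vol l) A B y z := fun y z =>
      S.Lw_uhat' (AllBal.n1 S hb hA hB z) hAB y
    rw [h1, S.U2_symm hb hA hB hAB, h1, S.U2_symm hb hA hB hAB]
  have hUl : S.U (S.Vol l) A B l = ((S.rk B : ℝ) - S.rk A - 1) * S.Vol l A B :=
    S.U_euler l hA hB hAB (hb A hA B hB hAB)
  have hll : S.U2 (S.Vol l) A B l' l' =
      ((S.rk B : ℝ) - S.rk A - 2) * (((S.rk B : ℝ) - S.rk A - 1) * S.Vol l A B) := by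
    rw [red, S.U2_euler l hA hB, hUl]
  have hxl : S.U2 (S.Vol l) A B x' l' = ((S.rk B : ℝ) - S.rk A - 2) * S.U (S.Vol l) A B x := by
    rw [red, S.U2_euler l hA hB]
  have hllpos : 0 < S.U2 (S.Vol l) A B l' l' := by
    rw [hll]
    exact mul_pos (by linarith) (mul_pos (by linarith) hV)
  have hq : φ l' ≠ 0 := by
    intro h
    exact absurd (hneg l' (uhat_left _ _ _) (uhat_right _ hAB) h) (not_le.2 hllpos)
  have hcs := rev_cs (xx := S.U2 (S.Vol l) A B x' x') (xl := S.U2 (S.Vol l) A B x' l')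
    (p := φ x') hllpos hq (by
      have hz := hneg ((fun F => φ l' * x' F) + fun F => (-φ x') * l' F)
        (by simp [hx', hl', uhat_left]) (by simp [hx', hl', uhat_right _ hAB])
        (by have := hφ (φ l') (-φ x') x' l'
            change φ (fun F => φ l' * x' F + (-φ x') * l' F) = 0
            rw [this]; ring)
      simp only [U2_add_left, U2_add_right, U2_smul_left, U2_smul_right] at hz
      rw [S.U2_symm hb hA hB hAB l' x'] at hz
      nlinarith)
  rw [hll, hxl, red] at hcs
  have hpos : 0 < (S.rk B : ℝ) - S.rk A - 2 := by linarith
  refine le_of_mul_le_mul_left ?_ hpos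
  nlinarith

end FlatSys
end SWL


namespace SWL
namespace FlatSys

variable {α : Type*} [DecidableEq α] (S : FlatSys α)

lemma neg_rank3 (l : Finset α → ℝ) {A B : Finset α} (hA : A ∈ S.L)
    (hB : B ∈ S.L) (hAB : A ⊂ B) (hr : S.rk B = S.rk A + 3) (x : Finset α → ℝ)
    (xA : x A = 0) (xB : x B = 0)
    (hx : ∑ G ∈ S.betw A B with S.rk G = S.rk A + 1, x G = 0) :
    S.U2 (S.Vol l) A B x x ≤ 0 := by
  classical
  set at' := (S.betw A B).filter (fun G => S.rk G = S.rk A + 1) with hat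
  set ln := (S.betw A B).filter (fun G => ¬ S.rk G = S.rk A + 1) with hln
  have mat : ∀ a, a ∈ at' ↔ a ∈ S.L ∧ A ⊂ a ∧ a ⊂ B ∧ S.rk a = S.rk A + 1 := by
    intro a; simp only [hat, Finset.mem_filter, S.mem_betw]; tauto
  have mln : ∀ a, a ∈ ln ↔ a ∈ S.L ∧ A ⊂ a ∧ a ⊂ B ∧ S.rk a = S.rk A + 2 := by
    intro a; simp only [hln, Finset.mem_filter, S.mem_betw]
    constructor
    · rintro ⟨⟨h1, h2, h3⟩, h4⟩
      have := S.rk_lt A hA a h1 h2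
      have := S.rk_lt a h1 B hB h3
      exact ⟨h1, h2, h3, by omega⟩
    · rintro ⟨h1, h2, h3, h4⟩
      exact ⟨⟨h1, h2, h3⟩, by omega⟩
  have bAL : ∀ L ∈ ln, S.betw A L = at'.filter (· ⊂ L) := by
    intro L hL
    obtain ⟨h1, h2, h3, h4⟩ := (mln L).1 hL
    ext a
    simp only [S.mem_betw, Finset.mem_filter, mat]
    constructor
    · rintro ⟨k1, k2, k3⟩
      have := S.rk_lt A hA a k1 k2
      have := S.rk_lt a k1 L h1 k3
      exact ⟨⟨k1, k2, k3.trans h3, by omega⟩, k3⟩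
    · rintro ⟨⟨k1, k2, _, _⟩, k3⟩
      exact ⟨k1, k2, k3⟩
  have baB : ∀ a ∈ at', S.betw a B = ln.filter (a ⊂ ·) := by
    intro a ha
    obtain ⟨h1, h2, h3, h4⟩ := (mat a).1 ha
    ext L
    simp only [S.mem_betw, Finset.mem_filter, mln]
    constructor
    · rintro ⟨k1, k2, k3⟩
      have := S.rk_lt a h1 L k1 k2
      have := S.rk_lt L k1 B hB k3
      exact ⟨⟨k1, h2.trans k2, k3, by omega⟩, k2⟩
    · rintro ⟨⟨k1, _, k2, _⟩, k3⟩
      exact ⟨k1, k3, k2⟩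
  set s : Finset α → ℝ := fun L => ∑ a ∈ at', if a ⊂ L then x a else 0 with hs
  have hN : ∀ a ∈ at', ∀ b ∈ at', a ≠ b →
      ∑ L ∈ ln, (if a ⊂ L then (1:ℝ) else 0) * (if b ⊂ L then (1:ℝ) else 0) = 1 := by
    intro a ha b hb hne
    obtain ⟨h1, h2, h3, h4⟩ := (mat a).1 ha
    obtain ⟨k1, k2, k3, k4⟩ := (mat b).1 hb
    obtain ⟨i, hi, hi'⟩ := Finset.exists_of_ssubset k2
    have hia : i ∉ a := fun h => hne (S.cov_unique A hA a h1 b k1 h2 k2 h4 k4 i h hi hi')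
    have := S.sum_rank2 l h1 hB h3 (by omega) (k3.subset hi) hia
    refine Eq.trans ?_ this
    rw [baB a ha, Finset.sum_filter (s := ln)]
    refine Finset.sum_congr rfl fun L hL => ?_
    obtain ⟨j1, j2, j3, j4⟩ := (mln L).1 hL
    by_cases haL : a ⊂ L
    · simp only [haL, if_true, one_mul]
      rw [S.Vol_cover l (by omega), S.Vol_cover l (by omega)]
      have : b ⊂ L ↔ i ∈ L := by
        constructor
        · intro h; exact h.subset hi
        · intro h
          obtain ⟨G, g1, g2, g3, g4, g5⟩ := S.cov A hA L j1 j2 i h hi'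
          have : G = b := S.cov_unique A hA G g1 b k1 g2 k2 g5 k4 i g4 hi hi'
          subst this
          refine Finset.ssubset_iff_subset_ne.2 ⟨g3, ?_⟩
          rintro rfl; omega
      simp [chi, this]
    · simp [haL]
  have hf : S.U2 (S.Vol l) A B x x = ∑ L ∈ ln, (2 * x L * s L - x L ^ 2)
      + ∑ a ∈ at', x a ^ 2 * (1 - ∑ L ∈ ln, if a ⊂ L then (1:ℝ) else 0) := by
    rw [S.U2_formula xA xB xA xB, ← Finset.sum_sub_distrib,
      ← Finset.sum_filter_add_sum_filter_not (S.betw A B) (fun G => S.rk G = S.rk A + 1), add_comm]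
    congr 1
    · refine Finset.sum_congr rfl fun L hL => ?_
      obtain ⟨j1, j2, j3, j4⟩ := (mln L).1 hL
      have e1 : S.kap (S.Vol l) A B L = 1 := by
        unfold kap
        obtain ⟨i, hi, hi', hp⟩ := exists_pick (R := ℝ) j2
        rw [S.betw_cover j1 hB (by omega), S.Vol_cover l (by omega : S.rk B = S.rk L + 1)]
        simp only [hp]
        rw [S.sum_rank2 l hA j1 j2 j4 hi hi']
        simp
      rw [e1, bAL L hL, hs, Finset.sum_filter, Finset.mul_sum]
      have : ∀ a ∈ at', (if a ⊂ L then (x L * x a + x a * x L) *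
          (S.Vol l A a * S.Vol l a L * S.Vol l L B) else 0) = 2 * x L * if a ⊂ L then x a else 0 := by
        intro a ha
        obtain ⟨h1, h2, h3, h4⟩ := (mat a).1 ha
        rw [S.Vol_cover l h4, S.Vol_cover l (by omega : S.rk L = S.rk a + 1),
          S.Vol_cover l (by omega : S.rk B = S.rk L + 1)]
        split_ifs <;> ring
      rw [Finset.sum_congr rfl this]
      ring
    · refine Finset.sum_congr rfl fun a ha => ?_
      obtain ⟨h1, h2, h3, h4⟩ := (mat a).1 ha
      have hAa := S.betw_cover hA h1 (by omega)
      have e1 : S.kap (S.Vol l) A B a = (∑ L ∈ ln, if a ⊂ L then (1:ℝ) else 0) - 1 := by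
        unfold kap
        obtain ⟨i, hi, hi', hp⟩ := exists_pick (R := ℝ) h3
        rw [hAa, S.Vol_cover l h4]
        simp only [hp]
        have := S.sum_rank2 l h1 hB h3 (by omega) hi hi'
        simp only [sub_mul, Finset.sum_sub_distrib, this, one_mul, Finset.sum_empty, zero_mul,
          zero_add, mul_one]
        rw [baB a ha, Finset.sum_filter]
        congr 1
        refine Finset.sum_congr rfl fun L hL => ?_
        obtain ⟨j1, j2, j3, j4⟩ := (mln L).1 hL
        rw [S.Vol_cover l (by omega : S.rk L = S.rk a + 1),
          S.Vol_cover l (by omega : S.rk B = S.rk L + 1), mul_one]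
      rw [e1, hAa]
      simp
      ring
  have hsq : ∑ L ∈ ln, s L ^ 2 = (∑ a ∈ at', x a) ^ 2
      - ∑ a ∈ at', x a ^ 2 * (1 - ∑ L ∈ ln, if a ⊂ L then (1:ℝ) else 0) := by
    have e1 : ∀ L, s L ^ 2 = ∑ a ∈ at', ∑ b ∈ at', x a * x b *
        ((if a ⊂ L then (1:ℝ) else 0) * (if b ⊂ L then (1:ℝ) else 0)) := by
      intro L
      rw [sq, hs, Finset.sum_mul_sum]
      refine Finset.sum_congr rfl fun a _ => Finset.sum_congr rfl fun b _ => ?_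
      split_ifs <;> ring
    simp only [e1]
    rw [Finset.sum_comm, sq, Finset.sum_mul_sum, ← Finset.sum_sub_distrib]
    refine Finset.sum_congr rfl fun a ha => ?_
    rw [Finset.sum_comm]
    have e3 : ∑ b ∈ at'.erase a, ∑ L ∈ ln, x a * x b *
        ((if a ⊂ L then (1:ℝ) else 0) * (if b ⊂ L then (1:ℝ) else 0)) =
        ∑ b ∈ at'.erase a, x a * x b := by
      refine Finset.sum_congr rfl fun b hb => ?_
      rw [← Finset.mul_sum, hN a ha b (Finset.mem_of_mem_erase hb)
        (Finset.ne_of_mem_erase hb).symm, mul_one]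
    rw [← Finset.add_sum_erase at' _ ha, e3, ← Finset.add_sum_erase at' (fun b => x a * x b) ha]
    have : ∀ L, ((if a ⊂ L then (1:ℝ) else 0) * (if a ⊂ L then (1:ℝ) else 0)) =
      if a ⊂ L then (1:ℝ) else 0 := by intro L; split_ifs <;> ring
    simp only [this, ← Finset.mul_sum]
    ring
  have hle : ∑ L ∈ ln, (2 * x L * s L - x L ^ 2) ≤ ∑ L ∈ ln, s L ^ 2 :=
    Finset.sum_le_sum fun L _ => by nlinarith [sq_nonneg (x L - s L)]
  rw [hf]
  rw [hsq, hx] at hle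
  linarith

end FlatSys
end SWL


namespace SWL
namespace FlatSys

variable {α : Type*} [DecidableEq α] (S : FlatSys α)

def Lor (l : Finset α → ℝ) (A B : Finset α) : Prop := ∀ x : Finset α → ℝ,
    S.U2 (S.Vol l) A B x x * (((S.rk B : ℝ) - S.rk A - 1) * S.Vol l A B) ≤
      ((S.rk B : ℝ) - S.rk A - 2) * S.U (S.Vol l) A B x ^ 2

lemma U_cover (V : Finset α → Finset α → ℝ) {A B : Finset α} (hA : A ∈ S.L) (hB : B ∈ S.L)
    (h : S.rk B ≤ S.rk A + 1) (x : Finset α → ℝ) : S.U V A B x = 0 := by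
  unfold U Lw; rw [S.betw_cover hA hB h]; simp

lemma U2_cover (V : Finset α → Finset α → ℝ) {A B : Finset α} (hA : A ∈ S.L) (hB : B ∈ S.L)
    (h : S.rk B ≤ S.rk A + 1) (x y : Finset α → ℝ) : S.U2 V A B x y = 0 := by
  unfold U2 Lw; rw [S.betw_cover hA hB h]; simp

lemma U2_rank2 (V : Finset α → Finset α → ℝ) {A B : Finset α} (hA : A ∈ S.L) (hB : B ∈ S.L)
    (h : S.rk B ≤ S.rk A + 2) (x y : Finset α → ℝ) : S.U2 V A B x y = 0 := by
  unfold U2 Lw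
  refine Finset.sum_eq_zero fun G hG => ?_
  obtain ⟨k1, k2, k3⟩ := S.mem_betw.1 hG
  have := S.rk_lt A hA G k1 k2
  have := S.rk_lt G k1 B hB k3
  unfold n1
  rw [S.U_cover V hA k1 (by omega), S.U_cover V k1 hB (by omega)]
  simp

lemma n1_uhat (l : Finset α → ℝ) {A B G : Finset α} (hA : A ∈ S.L) (hB : B ∈ S.L) (hAB : A ⊂ B)
    (hG : G ∈ S.betw A B) (y : Finset α → ℝ) :
    S.n1 (S.Vol l) A B (uhat y A B) G = S.n1 (S.Vol l) A B y G := by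
  have hb := S.allBal l
  rw [← S.U2_ee _ hG, ← S.U2_ee _ hG, S.U2_symm hb hA hB hAB, S.U2_symm hb hA hB hAB _ y]
  exact S.Lw_uhat' (AllBal.n1 S hb hA hB (ee G)) hAB y

lemma conn_aux {A B : Finset α} (hA : A ∈ S.L) (hB : B ∈ S.L) (hAB : A ⊂ B)
    (hr : S.rk A + 2 < S.rk B) (f : {G // G ∈ S.betw A B} → ℝ)
    (hf : ∀ a b : {G // G ∈ S.betw A B}, a.1 ⊂ b.1 → f a = f b) (a b) : f a = f b := by
  have hf' : ∀ a b : {G // G ∈ S.betw A B}, a.1 ⊆ b.1 → f a = f b := by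
    intro a b h
    by_cases e : a = b
    · rw [e]
    · exact hf a b (Finset.ssubset_iff_subset_ne.2 ⟨h, fun h' => e (Subtype.ext h')⟩)
  have key : ∀ a : {G // G ∈ S.betw A B}, ∃ c : {G // G ∈ S.betw A B}, ∃ i, i ∈ c.1 ∧ i ∉ A ∧
      S.rk c.1 = S.rk A + 1 ∧ f c = f a := by
    rintro ⟨G, hG⟩
    obtain ⟨k1, k2, k3⟩ := S.mem_betw.1 hG
    obtain ⟨i, hi, hi'⟩ := Finset.exists_of_ssubset k2
    obtain ⟨H, h1, h2, h3, h4, h5⟩ := S.cov A hA G k1 k2 i hi hi'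
    exact ⟨⟨H, S.mem_betw.2 ⟨h1, h2, Finset.ssubset_of_subset_of_ssubset h3 k3⟩⟩, i, h4, hi', h5,
      hf' _ _ h3⟩
  obtain ⟨⟨G, hG⟩, i, hi, hi', hrG, e1⟩ := key a
  obtain ⟨⟨H, hH⟩, j, hj, hj', hrH, e2⟩ := key b
  rw [← e1, ← e2]
  obtain ⟨k1, k2, k3⟩ := S.mem_betw.1 hG
  obtain ⟨j1, j2, j3⟩ := S.mem_betw.1 hH
  simp only at hi hj hrG hrH
  by_cases hjG : j ∈ G
  · have : G = H := S.cov_unique A hA G k1 H j1 k2 j2 hrG hrH j hjG hj hj'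
    subst this; rfl
  · obtain ⟨K, h1, h2, h3, h4, h5⟩ := S.cov G k1 B hB k3 j (j3.subset hj) hjG
    have hKB : K ⊂ B := Finset.ssubset_iff_subset_ne.2 ⟨h3, by rintro rfl; omega⟩
    have hAK := k2.trans h2
    obtain ⟨M, m1, m2, m3, m4, m5⟩ := S.cov A hA K h1 hAK j h4 hj'
    have : M = H := S.cov_unique A hA M m1 H j1 m2 j2 m5 hrH j m4 hj hj'
    subst this
    rw [hf' ⟨G, hG⟩ ⟨K, S.mem_betw.2 ⟨h1, hAK, hKB⟩⟩ h2.subset,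
      hf' ⟨M, hH⟩ ⟨K, S.mem_betw.2 ⟨h1, hAK, hKB⟩⟩ m3]

lemma n2_le (l : Finset α → ℝ) {A B G : Finset α} (hA : A ∈ S.L) (hB : B ∈ S.L)
    (hG : G ∈ S.betw A B) (h1 : S.Lor l A G) (h2 : S.Lor l G B) (x : Finset α → ℝ) :
    S.n2 (S.Vol l) A B x x G * (((S.rk B : ℝ) - S.rk A - 2) * (S.Vol l A G * S.Vol l G B)) ≤
      ((S.rk B : ℝ) - S.rk A - 3) * S.n1 (S.Vol l) A B x G ^ 2 := by
  obtain ⟨k1, k2, k3⟩ := S.mem_betw.1 hG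
  have r1 := S.rk_lt A hA G k1 k2
  have r2 := S.rk_lt G k1 B hB k3
  have r1' : (S.rk A : ℝ) + 1 ≤ S.rk G := by exact_mod_cast r1
  have r2' : (S.rk G : ℝ) + 1 ≤ S.rk B := by exact_mod_cast r2
  have := prod_ineq (m := (S.rk G : ℝ) - S.rk A - 1) (n := (S.rk B : ℝ) - S.rk G - 1)
    (f := S.Vol l A G) (g := S.Vol l G B) (f1 := S.U (S.Vol l) A G x) (g1 := S.U (S.Vol l) G B x)
    (f2 := S.U2 (S.Vol l) A G x x) (g2 := S.U2 (S.Vol l) G B x x) (by linarith) (by linarith)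
    (by have := h1 x; convert this using 2; ring) (by have := h2 x; convert this using 2; ring)
    (fun h => by
      have h' : (S.rk G : ℝ) = S.rk A + 1 := by linarith
      have h'' : S.rk G = S.rk A + 1 := by exact_mod_cast h'
      exact ⟨S.U_cover _ hA k1 h''.le x, S.U2_cover _ hA k1 h''.le x x⟩)
    (fun h => by
      have h' : (S.rk B : ℝ) = S.rk G + 1 := by linarith
      have h'' : S.rk B = S.rk G + 1 := by exact_mod_cast h'
      exact ⟨S.U_cover _ k1 hB h''.le x, S.U2_cover _ k1 hB h''.le x x⟩)
  unfold n2 n1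
  convert this using 2 <;> ring

lemma neg_big (l : Finset α → ℝ) (hp : S.Pos l) {A B : Finset α} (hA : A ∈ S.L) (hB : B ∈ S.L)
    (hAB : A ⊂ B) (hr : S.rk A + 3 < S.rk B)
    (ih : ∀ G ∈ S.betw A B, S.Lor l A G ∧ S.Lor l G B) (x : Finset α → ℝ) (xA : x A = 0)
    (xB : x B = 0) (hx : ∑ G ∈ S.betw A B, S.Vol l A G * S.Vol l G B * x G = 0) :
    S.U2 (S.Vol l) A B x x ≤ 0 := by
  classical
  have hb := S.allBal l
  have hr' : (S.rk A : ℝ) + 3 < S.rk B := by exact_mod_cast hr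
  have n1e : ∀ (y : Finset α → ℝ), y A = 0 → y B = 0 → ∀ a : {G // G ∈ S.betw A B},
      ∑ b : {G // G ∈ S.betw A B}, S.n1 (S.Vol l) A B (ee b.1) a.1 * y b.1
        = S.n1 (S.Vol l) A B y a.1 := by
    intro y hyA hyB a
    rw [S.n1_expand _ a.2 hyA hyB]
    exact Finset.sum_coe_sort (S.betw A B) (fun H => S.n1 (S.Vol l) A B (ee H) a.1 * y H)
  have U2e : ∀ (y : Finset α → ℝ), y A = 0 → y B = 0 →
      ∑ a : {G // G ∈ S.betw A B}, y a.1 * S.n1 (S.Vol l) A B y a.1 = S.U2 (S.Vol l) A B y y := by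
    intro y hyA hyB
    rw [U2, S.Lw_zero_ends _ hyA hyB]
    exact Finset.sum_coe_sort (S.betw A B) (fun H => y H * S.n1 (S.Vol l) A B y H)
  have ce : ∀ a : {G // G ∈ S.betw A B},
      ∑ b : {G // G ∈ S.betw A B}, S.n1 (S.Vol l) A B (ee b.1) a.1 * uhat l A B b.1
      = ((S.rk B : ℝ) - S.rk A - 2) * (S.Vol l A a.1 * S.Vol l a.1 B) := by
    intro a
    rw [n1e _ (uhat_left _ _ _) (uhat_right _ hAB), S.n1_uhat l hA hB hAB a.2,
      S.n1_euler l hA hB a.2]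
  have vp : ∀ a : {G // G ∈ S.betw A B}, 0 < S.Vol l A a.1 * S.Vol l a.1 B := by
    rintro ⟨G, hG⟩
    obtain ⟨k1, k2, k3⟩ := S.mem_betw.1 hG
    exact mul_pos (S.Vol_pos l hp hA k1 k2) (S.Vol_pos l hp k1 hB k3)
  have cp : ∀ a : {G // G ∈ S.betw A B},
      0 < ((S.rk B : ℝ) - S.rk A - 2) * (S.Vol l A a.1 * S.Vol l a.1 B) := fun a =>
    mul_pos (by linarith) (vp a)
  have v3 : ∀ a b : {G // G ∈ S.betw A B}, a.1 ⊂ b.1 →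
      0 < S.Vol l A a.1 * S.Vol l a.1 b.1 * S.Vol l b.1 B := by
    rintro ⟨G, hG⟩ ⟨H, hH⟩ h
    obtain ⟨k1, k2, k3⟩ := S.mem_betw.1 hG
    obtain ⟨j1, j2, j3⟩ := S.mem_betw.1 hH
    exact mul_pos (mul_pos (S.Vol_pos l hp hA k1 k2) (S.Vol_pos l hp k1 j1 h))
      (S.Vol_pos l hp j1 hB j3)
  have main := bochner_linear (ι := {G // G ∈ S.betw A B})
    (fun a b => S.n1 (S.Vol l) A B (ee b.1) a.1)
    (fun a b => by
      rw [← S.U2_ee _ a.2, ← S.U2_ee _ b.2, S.U2_symm hb hA hB hAB])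
    (fun a b hab => by
      rw [S.n1_ee _ a.2 b.2 fun h => hab (Subtype.ext h)]
      refine add_nonneg ?_ ?_
      · split_ifs with h
        · exact (v3 b a h).le
        · exact le_rfl
      · split_ifs with h
        · exact (v3 a b h).le
        · exact le_rfl)
    (fun a => uhat l A B a.1)
    (fun a => by
      obtain ⟨k1, k2, k3⟩ := S.mem_betw.1 a.2
      exact hp A hA B hB a.1 k1 k2 k3)
    (fun a => by rw [ce]; exact cp a)
    (fun y => by
      set X : Finset α → ℝ := fun F => if h : F ∈ S.betw A B then y ⟨F, h⟩ else 0 with hX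
      have XA : X A = 0 := by
        simp only [hX]; rw [dif_neg]; intro h; exact (S.mem_betw.1 h).2.1.ne rfl
      have XB : X B = 0 := by
        simp only [hX]; rw [dif_neg]; intro h; exact (S.mem_betw.1 h).2.2.ne rfl
      have Xy : ∀ a : {G // G ∈ S.betw A B}, y a = X a.1 := by
        intro a; simp only [hX]; rw [dif_pos a.2]
      simp only [Xy, n1e X XA XB, U2e X XA XB, ce]
      have hbo := S.bochner l hA hB hAB X
      have h3 : 0 < (S.rk B : ℝ) - S.rk A - 3 := by linarith
      refine le_of_mul_le_mul_left ?_ h3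
      rw [hbo, ← Finset.sum_coe_sort, Finset.mul_sum]
      refine Finset.sum_le_sum fun a _ => ?_
      obtain ⟨k1, k2, k3⟩ := S.mem_betw.1 a.2
      have hl := hp A hA B hB a.1 k1 k2 k3
      rw [mul_div_assoc', le_div_iff₀ (cp a)]
      have := mul_le_mul_of_nonneg_left
        (S.n2_le l hA hB a.2 (ih a.1 a.2).1 (ih a.1 a.2).2 X) hl.le
      linarith)
    (fun f hf => S.conn_aux hA hB hAB (by omega) f fun a b hab =>
      hf a b (fun h => hab.ne (congrArg _ h)) (by
        rw [S.n1_ee _ a.2 b.2 hab.ne, if_pos hab, if_neg fun h => (hab.trans h).ne rfl, zero_add]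
        exact v3 a b hab))
    (fun a => x a.1)
    (by
      simp only [ce, mul_assoc]
      rw [← Finset.mul_sum]
      have : ∑ a : {G // G ∈ S.betw A B}, S.Vol l A a.1 * (S.Vol l a.1 B * x a.1) = 0 := by
        simp only [mul_assoc] at hx
        rw [← hx]
        exact Finset.sum_coe_sort (S.betw A B) (fun G => S.Vol l A G * (S.Vol l G B * x G))
      rw [this, mul_zero])
  simp only [n1e x xA xB, U2e x xA xB] at main
  exact main

lemma lorentz_aux (l : Finset α → ℝ) (hp : S.Pos l) (n : ℕ) : ∀ A ∈ S.L, ∀ B ∈ S.L, A ⊂ B →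
    S.rk B ≤ S.rk A + n → S.Lor l A B := by
  induction n with
  | zero =>
    intro A hA B hB hAB h
    have := S.rk_lt A hA B hB hAB
    omega
  | succ n ih =>
    intro A hA B hB hAB h
    have hlt := S.rk_lt A hA B hB hAB
    rcases Nat.lt_or_ge (S.rk A + 2) (S.rk B) with h2 | h2
    · rcases Nat.lt_or_ge (S.rk A + 3) (S.rk B) with h3 | h3
      · refine S.lorentz_of_neg l hp hA hB hAB h2
          (fun x => ∑ G ∈ S.betw A B, S.Vol l A G * S.Vol l G B * x G) ?_ ?_
        · intro a b x y
          rw [Finset.mul_sum, Finset.mul_sum, ← Finset.sum_add_distrib]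
          exact Finset.sum_congr rfl fun G _ => by ring
        · intro x xA xB hx
          refine S.neg_big l hp hA hB hAB h3 (fun G hG => ?_) x xA xB hx
          obtain ⟨k1, k2, k3⟩ := S.mem_betw.1 hG
          have := S.rk_lt A hA G k1 k2
          have := S.rk_lt G k1 B hB k3
          exact ⟨ih A hA G k1 k2 (by omega), ih G k1 B hB k3 (by omega)⟩
      · refine S.lorentz_of_neg l hp hA hB hAB h2
          (fun x => ∑ G ∈ S.betw A B with S.rk G = S.rk A + 1, x G) ?_ ?_
        · intro a b x y
          rw [Finset.mul_sum, Finset.mul_sum, ← Finset.sum_add_distrib]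
        · intro x xA xB hx
          exact S.neg_rank3 l hA hB hAB (by omega) x xA xB hx
    · intro x
      rw [S.U2_rank2 _ hA hB h2, zero_mul]
      rcases Nat.lt_or_ge (S.rk A + 1) (S.rk B) with h3 | h3
      · have : S.rk B = S.rk A + 2 := by omega
        rw [this]; push_cast
        nlinarith
      · rw [S.U_cover _ hA hB h3]; simp

lemma lorentz (l : Finset α → ℝ) (hp : S.Pos l) {A B : Finset α} (hA : A ∈ S.L) (hB : B ∈ S.L)
    (hAB : A ⊂ B) : S.Lor l A B := S.lorentz_aux l hp (S.rk B) A hA B hB hAB (by omega)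

end FlatSys
end SWL


namespace SWL
namespace FlatSys

variable {α : Type*} [DecidableEq α] (S : FlatSys α)

/-- the perturbed vector -/
def leps (ε : ℝ) (F : Finset α) : ℝ := (if F = ∅ then -1 else 0) - ε * (F.card : ℝ) ^ 2

lemma leps_pos {ε : ℝ} (hε : 0 < ε) : S.Pos (leps ε) := by
  intro A _ B _ G _ hAG hGB
  have h1 : (A.card : ℝ) < G.card := by exact_mod_cast Finset.card_lt_card hAG
  have h2 : (G.card : ℝ) < B.card := by exact_mod_cast Finset.card_lt_card hGB
  have hG : G ≠ ∅ := by rintro rfl; exact Finset.not_ssubset_empty _ hAG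
  have hB : B ≠ ∅ := by rintro rfl; exact Finset.not_ssubset_empty _ hGB
  unfold uhat leps
  rw [if_neg hG, if_neg hB]
  have hpos : 0 < (B.card : ℝ) - A.card := by linarith
  rw [mul_div_assoc', sub_pos, div_lt_iff₀ hpos]
  have key : 0 < ε * (((G.card : ℝ) - A.card) * (((B.card : ℝ) - G.card) * ((B.card : ℝ) - A.card))) :=
    mul_pos hε (mul_pos (by linarith) (mul_pos (by linarith) hpos))
  split_ifs <;> nlinarith

lemma uhat_cont (A B G : Finset α) : Continuous fun ε : ℝ => uhat (leps ε) A B G := by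
  unfold uhat leps
  fun_prop

lemma Vol_cont (n : ℕ) : ∀ A B : Finset α, B.card ≤ A.card + n →
    Continuous fun ε : ℝ => S.Vol (leps ε) A B := by
  induction n with
  | zero =>
    intro A B h
    by_cases h1 : S.rk A + 1 < S.rk B
    · simp only [S.Vol_rec _ h1]
      have : S.betw A B = ∅ := by
        rw [Finset.eq_empty_iff_forall_notMem]
        intro G hG
        obtain ⟨_, k2, k3⟩ := S.mem_betw.1 hG
        have := Finset.card_lt_card (k2.trans k3)
        omega
      simp [this, continuous_const]
    · have : ∀ ε : ℝ, S.Vol (leps ε) A B = 1 := by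
        intro ε; rw [Vol, if_pos (by omega)]
      simp only [this]; exact continuous_const
  | succ n ih =>
    intro A B h
    by_cases h1 : S.rk A + 1 < S.rk B
    · simp only [S.Vol_rec _ h1]
      refine Continuous.div_const (continuous_finsetSum _ fun G hG => ?_) _
      obtain ⟨_, k2, k3⟩ := S.mem_betw.1 hG
      have := Finset.card_lt_card k2
      have := Finset.card_lt_card k3
      exact (uhat_cont A B G).mul ((ih A G (by omega)).mul (ih G B (by omega)))
    · have : ∀ ε : ℝ, S.Vol (leps ε) A B = 1 := by
        intro ε; rw [Vol, if_pos (by omega)]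
      simp only [this]; exact continuous_const

lemma Vol_cont' (A B : Finset α) : Continuous fun ε : ℝ => S.Vol (leps ε) A B :=
  S.Vol_cont B.card A B (by omega)

lemma U_cont (A B : Finset α) (x : Finset α → ℝ) :
    Continuous fun ε : ℝ => S.U (S.Vol (leps ε)) A B x := by
  unfold U Lw
  exact continuous_finsetSum _ fun G _ => continuous_const.mul
    ((S.Vol_cont' A G).mul (S.Vol_cont' G B))

lemma U2_cont (A B : Finset α) (x y : Finset α → ℝ) :
    Continuous fun ε : ℝ => S.U2 (S.Vol (leps ε)) A B x y := by
  unfold U2 n1 Lw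
  exact continuous_finsetSum _ fun G _ => continuous_const.mul
    (((S.U_cont A G y).mul (S.Vol_cont' G B)).add ((S.Vol_cont' A G).mul (S.U_cont G B y)))

lemma lor_zero {A B : Finset α} (hA : A ∈ S.L) (hB : B ∈ S.L) (hAB : A ⊂ B) :
    S.Lor (leps 0) A B := by
  intro x
  have h1 : Continuous fun ε : ℝ => S.U2 (S.Vol (leps ε)) A B x x *
      (((S.rk B : ℝ) - S.rk A - 1) * S.Vol (leps ε) A B) :=
    (S.U2_cont A B x x).mul (continuous_const.mul (S.Vol_cont' A B))
  have h2 : Continuous fun ε : ℝ => ((S.rk B : ℝ) - S.rk A - 2) *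
      S.U (S.Vol (leps ε)) A B x ^ 2 := continuous_const.mul ((S.U_cont A B x).pow 2)
  refine le_of_tendsto_of_tendsto (b := nhdsWithin (0:ℝ) (Set.Ioi 0))
    (h1.continuousWithinAt.tendsto) (h2.continuousWithinAt.tendsto) ?_
  filter_upwards [self_mem_nhdsWithin] with ε hε
  exact S.lorentz (leps ε) (S.leps_pos hε) hA hB hAB x

lemma leps0 (F : Finset α) : leps 0 F = if F = ∅ then -1 else 0 := by simp [leps]

lemma Vol_zero {A B : Finset α} (hA : A ≠ ∅) (h : S.rk A + 1 < S.rk B) :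
    S.Vol (leps 0) A B = 0 := by
  rw [S.Vol_rec _ h, Finset.sum_eq_zero, zero_div]
  intro G hG
  obtain ⟨_, k2, k3⟩ := S.mem_betw.1 hG
  have hG : G ≠ ∅ := by rintro rfl; exact Finset.not_ssubset_empty _ k2
  have hB : B ≠ ∅ := by rintro rfl; exact Finset.not_ssubset_empty _ k3
  simp [uhat, leps0, hA, hG, hB]

lemma ne_empty_of_betw {A B G : Finset α} (h : G ∈ S.betw A B) : G ≠ ∅ := by
  rintro rfl; exact Finset.not_ssubset_empty _ (S.mem_betw.1 h).2.1

/-- collapse of a weighted sum to coatoms -/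
lemma sum_coatom {B : Finset α} (hB : B ∈ S.L) (f : Finset α → ℝ) :
    ∑ G ∈ S.betw ∅ B, f G * (S.Vol (leps 0) ∅ G * S.Vol (leps 0) G B)
      = ∑ G ∈ S.betw ∅ B with S.rk G + 1 = S.rk B, f G * S.Vol (leps 0) ∅ G := by
  rw [Finset.sum_filter]
  refine Finset.sum_congr rfl fun G hG => ?_
  obtain ⟨k1, k2, k3⟩ := S.mem_betw.1 hG
  have := S.rk_lt G k1 B hB k3
  split_ifs with h
  · rw [S.Vol_cover (leps 0) (by omega : S.rk B = S.rk G + 1)]; ring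
  · rw [S.Vol_zero (S.ne_empty_of_betw hG) (by omega)]; ring

lemma Vol_step (hE : ∅ ∈ S.L) {B : Finset α} (hB : B ∈ S.L) {i : α} (hi : i ∈ B) :
    ((S.rk B : ℝ) - S.rk ∅ - 1) * S.Vol (leps 0) ∅ B =
      ∑ G ∈ S.betw ∅ B with S.rk G + 1 = S.rk B ∧ i ∉ G, S.Vol (leps 0) ∅ G := by
  have hne : B ≠ ∅ := Finset.ne_empty_of_mem hi
  have hAB : ∅ ⊂ B := Finset.empty_ssubset.2 ⟨i, hi⟩
  have hb := S.allBal (leps 0) ∅ hE B hB hAB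
  rw [← S.U_euler _ hE hB hAB hb, S.U_eq hb hAB hi (Finset.notMem_empty i), ← Finset.filter_filter,
    S.sum_coatom hB, Finset.sum_filter (p := fun G => i ∉ G)]
  refine Finset.sum_congr rfl fun G hG => ?_
  have := S.ne_empty_of_betw (Finset.mem_filter.1 hG).1
  by_cases h : i ∈ G <;> simp [leps0, this, hne, chi, h]

variable {m : Finset α → ℝ}

lemma Vol_eq_m (hE : ∅ ∈ S.L) (h0 : S.rk ∅ = 0) (hm0 : m ∅ = 1)
    (hm : ∀ B ∈ S.L, ∀ i ∈ B, m B = ∑ G ∈ S.L with G ⊂ B ∧ S.rk G + 1 = S.rk B ∧ i ∉ G, m G)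
    (n : ℕ) : ∀ B ∈ S.L, S.rk B = n + 1 → (n.factorial : ℝ) * S.Vol (leps 0) ∅ B = m B := by
  induction n with
  | zero =>
    intro B hB hr
    have hne : B ≠ ∅ := by rintro rfl; omega
    obtain ⟨i, hi⟩ := Finset.nonempty_iff_ne_empty.2 hne
    rw [S.Vol_cover _ (by omega), hm B hB i hi, Finset.sum_eq_single ∅]
    · simp [hm0]
    · intro G hG hGe
      simp only [Finset.mem_filter] at hG
      have := S.rk_lt ∅ hE G hG.1 (Finset.empty_ssubset.2 (Finset.nonempty_iff_ne_empty.2 hGe))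
      omega
    · intro h
      exfalso; apply h
      simp only [Finset.mem_filter]
      exact ⟨hE, Finset.empty_ssubset.2 ⟨i, hi⟩, by omega, Finset.notMem_empty i⟩
  | succ n ih =>
    intro B hB hr
    have hne : B ≠ ∅ := by rintro rfl; omega
    obtain ⟨i, hi⟩ := Finset.nonempty_iff_ne_empty.2 hne
    have hs := S.Vol_step hE hB hi
    rw [hr, h0] at hs
    push_cast at hs
    rw [Nat.factorial_succ]
    push_cast
    have : ((n : ℝ) + 1) * n.factorial * S.Vol (leps 0) ∅ B =
      n.factorial * (((n : ℝ) + 1 + 1 - 0 - 1) * S.Vol (leps 0) ∅ B) := by ring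
    rw [this, hs, Finset.mul_sum, hm B hB i hi]
    refine Finset.sum_congr ?_ ?_
    · ext G
      simp only [Finset.mem_filter, S.mem_betw, hr]
      constructor
      · rintro ⟨⟨a, b, c⟩, d, e⟩; exact ⟨a, c, by omega, e⟩
      · rintro ⟨a, c, d, e⟩
        refine ⟨⟨a, ?_, c⟩, by omega, e⟩
        rw [Finset.empty_ssubset, Finset.nonempty_iff_ne_empty]
        rintro rfl; omega
    · intro G hG
      simp only [Finset.mem_filter] at hG
      exact ih G hG.1 (by omega)

theorem logconc (hE : ∅ ∈ S.L) (h0 : S.rk ∅ = 0) (hm0 : m ∅ = 1)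
    (hm : ∀ B ∈ S.L, ∀ i ∈ B, m B = ∑ G ∈ S.L with G ⊂ B ∧ S.rk G + 1 = S.rk B ∧ i ∉ G, m G)
    {T : Finset α} (hT : T ∈ S.L) {p : α} (hp : p ∈ T) (n : ℕ) (hr : S.rk T = n + 3) :
    (∑ G ∈ S.betw ∅ T with S.rk G = n + 1 ∧ p ∈ G, m G) * m T ≤
      (∑ G ∈ S.betw ∅ T with S.rk G = n + 2 ∧ p ∈ G, m G) ^ 2 := by
  have hAB : ∅ ⊂ T := Finset.empty_ssubset.2 ⟨p, hp⟩
  have hTe : ∅ ≠ T := hAB.ne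
  have hb := S.allBal (leps (α := α) 0)
  set V := S.Vol (leps (α := α) 0) with hV
  set al : Finset α → ℝ := fun F => if F = T then -1 else 0 with hal
  have alT : al T = -1 := by simp [hal]
  have alne : ∀ F, F ≠ T → al F = 0 := fun F h => by simp [hal, h]
  have hU : S.U V ∅ T al = ∑ G ∈ S.betw ∅ T with S.rk G = n + 2 ∧ p ∈ G, V ∅ G := by
    rw [S.U_eq (hb ∅ hE T hT hAB) hAB hp (Finset.notMem_empty p), hV, S.sum_coatom hT,
      ← Finset.filter_filter, Finset.sum_filter (p := fun G => p ∈ G)]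
    refine Finset.sum_congr (by ext; simp [hr]) fun G hG => ?_
    have hG := (S.mem_betw.1 (Finset.mem_filter.1 hG).1).2.2.ne
    rw [alT, alne G hG, alne ∅ hTe]
    by_cases h : p ∈ G <;> simp [chi, h]
  have hU2 : S.U2 V ∅ T al al = ∑ G ∈ S.betw ∅ T with S.rk G = n + 1 ∧ p ∈ G, V ∅ G := by
    unfold U2
    rw [S.Lw_eq (AllBal.n1 S hb hE hT al) hAB hp (Finset.notMem_empty p), Finset.sum_filter]
    refine Finset.sum_congr rfl fun G hG => ?_
    obtain ⟨k1, k2, k3⟩ := S.mem_betw.1 hG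
    have hrG := S.rk_lt G k1 T hT k3
    have hGe := S.ne_empty_of_betw hG
    rw [alT, alne G k3.ne, alne ∅ hTe]
    by_cases h : p ∈ G
    · have e1 : S.U V ∅ G al = 0 := by
        unfold U
        rw [S.Lw_zero_ends _ (alne ∅ hTe) (alne G k3.ne)]
        refine Finset.sum_eq_zero fun H hH => ?_
        rw [alne H ((S.mem_betw.1 hH).2.2.trans k3).ne, zero_mul]
      obtain ⟨j, hj, hj'⟩ := Finset.exists_of_ssubset k3
      have e2 : S.U V G T al = if S.rk G = n + 1 then 1 else 0 := by
        rw [S.U_eq (hb G k1 T hT k3) k3 hj hj']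
        have : ∀ K ∈ S.betw G T, (al K - al G - (al T - al G) * chi ℝ j K) * (V G K * V K T)
            = chi ℝ j K * (V G K * V K T) := by
          intro K hK
          rw [alT, alne G k3.ne, alne K (S.mem_betw.1 hK).2.2.ne]; ring
        rw [Finset.sum_congr rfl this]
        split_ifs with h1
        · exact S.sum_rank2 _ k1 hT k3 (by omega) hj hj'
        · refine Finset.sum_eq_zero fun K hK => ?_
          obtain ⟨j1, j2, j3⟩ := S.mem_betw.1 hK
          have r1 := S.rk_lt G k1 K j1 j2
          have r2 := S.rk_lt K j1 T hT j3
          rcases Nat.lt_or_ge (S.rk G + 1) (S.rk K) with h2 | h2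
          · rw [hV, S.Vol_zero hGe h2]; ring
          · rw [hV, S.Vol_zero (A := K) (S.ne_empty_of_betw hK) (by omega)]; ring
      unfold n1
      rw [e1, e2]
      by_cases h1 : S.rk G = n + 1 <;> simp [chi, h, h1]
    · simp [chi, h]
  have hlor := S.lor_zero hE hT hAB al
  rw [← hV, hU, hU2, hr, h0] at hlor
  have f1 : ∑ G ∈ S.betw ∅ T with S.rk G = n + 1 ∧ p ∈ G, m G
      = n.factorial * ∑ G ∈ S.betw ∅ T with S.rk G = n + 1 ∧ p ∈ G, V ∅ G := by
    rw [Finset.mul_sum]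
    refine Finset.sum_congr rfl fun G hG => ?_
    obtain ⟨h1, h2⟩ := Finset.mem_filter.1 hG
    exact (S.Vol_eq_m hE h0 hm0 hm n G (S.mem_betw.1 h1).1 h2.1).symm
  have f2 : ∑ G ∈ S.betw ∅ T with S.rk G = n + 2 ∧ p ∈ G, m G
      = (n+1).factorial * ∑ G ∈ S.betw ∅ T with S.rk G = n + 2 ∧ p ∈ G, V ∅ G := by
    rw [Finset.mul_sum]
    refine Finset.sum_congr rfl fun G hG => ?_
    obtain ⟨h1, h2⟩ := Finset.mem_filter.1 hG
    exact (S.Vol_eq_m hE h0 hm0 hm (n+1) G (S.mem_betw.1 h1).1 h2.1).symm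
  have f3 : m T = (n+2).factorial * V ∅ T := (S.Vol_eq_m hE h0 hm0 hm (n+2) T hT hr).symm
  rw [f1, f2, f3]
  have g1 : ((n+1).factorial : ℝ) = (n+1) * n.factorial := by
    rw [Nat.factorial_succ]; push_cast; ring
  have g2 : ((n+2).factorial : ℝ) = (n+2) * ((n+1) * n.factorial) := by
    rw [Nat.factorial_succ]; push_cast; rw [g1]; ring
  rw [g1, g2]
  push_cast at hlor
  set a := ∑ G ∈ S.betw ∅ T with S.rk G = n + 1 ∧ p ∈ G, V ∅ G
  set b := ∑ G ∈ S.betw ∅ T with S.rk G = n + 2 ∧ p ∈ G, V ∅ G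
  have hc : 0 ≤ (n.factorial : ℝ) ^ 2 * (n + 1) := by positivity
  have := mul_le_mul_of_nonneg_left hlor hc
  nlinarith

end FlatSys
end SWL


namespace SWL

/-- Local conditions for the rank function of a loopless matroid. -/
structure RankFn (α : Type*) [DecidableEq α] where
  r : Finset α → ℕ
  r0 : r ∅ = 0
  mono : ∀ X e, r X ≤ r (insert e X)
  unit : ∀ X e, r (insert e X) ≤ r X + 1
  loc : ∀ X e f, r (insert e X) = r X → r (insert f X) = r X → r (insert e (insert f X)) = r X
  loopless : ∀ e, r {e} = 1

namespace RankFn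

variable {α : Type*} [DecidableEq α] (R : RankFn α)

lemma mono' {X Y : Finset α} (h : X ⊆ Y) : R.r X ≤ R.r Y := by
  have : ∀ Z : Finset α, R.r X ≤ R.r (Z ∪ X) := by
    intro Z
    induction Z using Finset.induction_on with
    | empty => simp
    | insert a s _ ih =>
      rw [Finset.insert_union]; exact ih.trans (R.mono _ _)
  have := this Y
  rwa [Finset.union_eq_left.2 h] at this

lemma clo_step {X : Finset α} {e : α} (he : R.r (insert e X) = R.r X) (f : α) :
    R.r (insert e (insert f X)) = R.r (insert f X) := by
  have h1 := R.mono X f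
  have h2 := R.unit X f
  by_cases h : R.r (insert f X) = R.r X
  · rw [R.loc X e f he h, h]
  · have h3 := R.unit (insert e X) f
    have h4 := R.mono (insert f X) e
    rw [Finset.insert_comm] at h3
    omega

lemma clo_mono {X Y : Finset α} (h : X ⊆ Y) {e : α} (he : R.r (insert e X) = R.r X) :
    R.r (insert e Y) = R.r Y := by
  have : ∀ Z : Finset α, R.r (insert e (Z ∪ X)) = R.r (Z ∪ X) := by
    intro Z
    induction Z using Finset.induction_on with
    | empty => simpa using he
    | insert a s _ ih =>
      rw [Finset.insert_union]; exact R.clo_step ih a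
  have := this Y
  rwa [Finset.union_eq_left.2 h] at this

lemma trunc_loc (N : ℕ) (X : Finset α) (e f : α)
    (h1 : min (R.r (insert e X)) N = min (R.r X) N)
    (h2 : min (R.r (insert f X)) N = min (R.r X) N) :
    min (R.r (insert e (insert f X))) N = min (R.r X) N := by
  have a1 := R.mono X e
  have a2 := R.mono X f
  have a3 := R.mono (insert f X) e
  rcases Nat.lt_or_ge (R.r X) N with h | h
  · have := R.loc X e f (by omega) (by omega)
    rw [this]
  · omega

variable [Fintype α]

def cl (X : Finset α) : Finset α := Finset.univ.filter fun e => R.r (insert e X) = R.r X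

lemma mem_cl {X : Finset α} {e : α} : e ∈ R.cl X ↔ R.r (insert e X) = R.r X := by simp [cl]

lemma sub_cl (X : Finset α) : X ⊆ R.cl X := fun e he => by
  rw [mem_cl, Finset.insert_eq_of_mem he]

lemma r_cl (X : Finset α) : R.r (R.cl X) = R.r X := by
  have : ∀ Z : Finset α, Z ⊆ R.cl X → R.r (Z ∪ X) = R.r X := by
    intro Z
    induction Z using Finset.induction_on with
    | empty => simp
    | insert a s _ ih =>
      intro h
      rw [Finset.insert_union]
      rw [R.clo_mono (Finset.subset_union_right) (R.mem_cl.1 (h (Finset.mem_insert_self a s)))]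
      exact ih ((Finset.subset_insert a s).trans h)
  have := this (R.cl X) subset_rfl
  rwa [Finset.union_eq_left.2 (R.sub_cl X)] at this

def flats : Finset (Finset α) := Finset.univ.filter fun F => ∀ e, e ∉ F → R.r (insert e F) ≠ R.r F

lemma mem_flats {F : Finset α} : F ∈ R.flats ↔ ∀ e, e ∉ F → R.r (insert e F) ≠ R.r F := by
  simp [flats]

lemma cl_flat (X : Finset α) : R.cl X ∈ R.flats := by
  rw [mem_flats]
  intro e he h
  rw [mem_cl] at he
  have h1 := R.mono' (Finset.insert_subset_insert e (R.sub_cl X))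
  have h2 := R.mono X e
  rw [r_cl] at h
  omega

lemma cl_sub {X F : Finset α} (hF : F ∈ R.flats) (h : X ⊆ F) : R.cl X ⊆ F := by
  intro e he
  by_contra hn
  exact R.mem_flats.1 hF e hn (R.clo_mono h (R.mem_cl.1 he))

lemma cl_eq {X F : Finset α} (hF : F ∈ R.flats) (h : X ⊆ F) (hr : R.r F ≤ R.r X) : R.cl X = F := by
  refine (R.cl_sub hF h).antisymm fun e he => ?_
  rw [mem_cl]
  have h1 := R.mono' (Finset.insert_subset he h)
  have h2 := R.mono X e
  omega

lemma r_insert {F : Finset α} (hF : F ∈ R.flats) {i : α} (hi : i ∉ F) :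
    R.r (insert i F) = R.r F + 1 := by
  have h1 := R.mono F i
  have h2 := R.unit F i
  have h3 := R.mem_flats.1 hF i hi
  omega

def FS : FlatSys α where
  L := R.flats
  rk := R.r
  rk_lt := by
    intro A hA B _ h
    obtain ⟨i, hi, hi'⟩ := Finset.exists_of_ssubset h
    have := R.r_insert hA hi'
    have := R.mono' (Finset.insert_subset hi h.subset)
    omega
  cov := by
    intro A hA B hB h i hi hi'
    have h1 := R.sub_cl (insert i A)
    refine ⟨R.cl (insert i A), R.cl_flat _, ?_, R.cl_sub hB (Finset.insert_subset hi h.subset),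
      h1 (Finset.mem_insert_self i A), by rw [r_cl, R.r_insert hA hi']⟩
    exact Finset.ssubset_of_ssubset_of_subset (Finset.ssubset_insert hi') h1
  cov_unique := by
    intro A hA G hG G' hG' h h' hr hr' i hi hi' hiA
    have e := R.r_insert hA hiA
    rw [← R.cl_eq hG (Finset.insert_subset hi h.subset) (by omega),
      ← R.cl_eq hG' (Finset.insert_subset hi' h'.subset) (by omega)]

noncomputable def sg (X : Finset α) : ℝ := (-1) ^ X.card

noncomputable def g (F : Finset α) : ℝ := ∑ X : Finset α with R.cl X = F, sg X

lemma g_form {F : Finset α} {i : α} (hi : i ∈ F) :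
    R.g F = - ∑ Y : Finset α with i ∉ R.cl Y ∧ R.cl (insert i Y) = F, sg Y := by
  have hu : (Finset.univ : Finset (Finset α)) =
      (insert i ((Finset.univ : Finset α).erase i)).powerset := by
    rw [Finset.insert_erase (Finset.mem_univ i)]; simp
  unfold g
  rw [Finset.sum_filter, Finset.sum_filter, hu,
    Finset.sum_powerset_insert (Finset.notMem_erase i _),
    Finset.sum_powerset_insert (Finset.notMem_erase i _), ← Finset.sum_add_distrib,
    ← Finset.sum_add_distrib, ← Finset.sum_neg_distrib]
  refine Finset.sum_congr rfl fun Y hY => ?_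
  have hiY : i ∉ Y := fun h => Finset.notMem_erase i _ (Finset.mem_powerset.1 hY h)
  have e1 : sg (insert i Y) = - sg Y := by
    unfold sg; rw [Finset.card_insert_of_notMem hiY, pow_succ]; ring
  have e2 : i ∈ R.cl (insert i Y) := R.sub_cl _ (Finset.mem_insert_self i Y)
  have e3 : i ∈ R.cl Y → R.cl (insert i Y) = R.cl Y := fun h =>
    R.cl_eq (R.cl_flat Y) (Finset.insert_subset h (R.sub_cl Y)) (by
      rw [r_cl]; exact R.mono _ _)
  rw [e1]
  by_cases h1 : i ∈ R.cl Y
  · rw [e3 h1]; simp [h1]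
    split_ifs <;> ring
  · have : R.cl Y ≠ F := by rintro rfl; exact h1 hi
    simp [this, h1, e2]
    split_ifs <;> simp

noncomputable def m (F : Finset α) : ℝ := (-1) ^ R.r F * R.g F

lemma m_empty : R.m ∅ = 1 := by
  have : (Finset.univ.filter fun X : Finset α => R.cl X = ∅) = {∅} := by
    ext X
    simp only [Finset.mem_filter, Finset.mem_univ, true_and, Finset.mem_singleton]
    constructor
    · intro h; exact Finset.subset_empty.1 (h ▸ R.sub_cl X)
    · rintro rfl
      rw [Finset.eq_empty_iff_forall_notMem]
      intro e he
      rw [mem_cl, R.r0] at he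
      have := R.loopless e
      simp at he; omega
  simp [m, R.r0, g, this, sg]

lemma m_rec : ∀ B ∈ R.FS.L, ∀ i ∈ B,
    R.m B = ∑ G ∈ R.FS.L with G ⊂ B ∧ R.FS.rk G + 1 = R.FS.rk B ∧ i ∉ G, R.m G := by
  intro B hB i hi
  change R.m B = ∑ G ∈ R.flats with G ⊂ B ∧ R.r G + 1 = R.r B ∧ i ∉ G, R.m G
  have hB : B ∈ R.flats := hB
  have e1 : ∑ G ∈ R.flats with G ⊂ B ∧ R.r G + 1 = R.r B ∧ i ∉ G, R.m G =
      - (-1) ^ R.r B * ∑ G ∈ R.flats with G ⊂ B ∧ R.r G + 1 = R.r B ∧ i ∉ G, R.g G := by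
    rw [Finset.mul_sum]
    refine Finset.sum_congr rfl fun G hG => ?_
    have := (Finset.mem_filter.1 hG).2.2.1
    rw [m, ← this, pow_succ]; ring
  rw [e1, m, R.g_form hi]
  unfold g
  rw [mul_neg, neg_mul]
  congr 2
  have : ∀ G, ∑ X : Finset α with R.cl X = G, sg X = ∑ X : Finset α, if R.cl X = G then sg X else 0 :=
    fun G => Finset.sum_filter _ _
  simp only [this]
  rw [Finset.sum_comm, Finset.sum_filter]
  refine Finset.sum_congr rfl fun Y _ => ?_
  rw [Finset.sum_ite_eq]
  have hiff : (i ∉ R.cl Y ∧ R.cl (insert i Y) = B) ↔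
      R.cl Y ∈ R.flats.filter (fun G => G ⊂ B ∧ R.r G + 1 = R.r B ∧ i ∉ G) := by
    simp only [Finset.mem_filter, R.cl_flat, true_and, R.r_cl]
    have key : i ∉ R.cl Y → R.r (insert i Y) = R.r Y + 1 := by
      intro h
      rw [mem_cl] at h
      have := R.mono Y i
      have := R.unit Y i
      omega
    constructor
    · rintro ⟨h1, h2⟩
      have h3 : R.r B = R.r Y + 1 := by rw [← h2, r_cl, key h1]
      refine ⟨?_, h3.symm, h1⟩
      have : R.cl Y ⊆ B := by
        rw [← h2]
        exact R.cl_sub (R.cl_flat _) ((Finset.subset_insert i Y).trans (R.sub_cl _))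
      refine Finset.ssubset_iff_subset_ne.2 ⟨this, ?_⟩
      rintro rfl; exact h1 hi
    · rintro ⟨h1, h2, h3⟩
      refine ⟨h3, R.cl_eq hB (Finset.insert_subset hi ((R.sub_cl Y).trans h1.subset)) ?_⟩
      rw [key h3, h2]
  by_cases h : (i ∉ R.cl Y ∧ R.cl (insert i Y) = B)
  · rw [if_pos h, if_pos (hiff.1 h)]
  · rw [if_neg h, if_neg fun h' => h (hiff.2 h')]

noncomputable def a (p : α) (k : ℕ) : ℝ :=
  (-1) ^ k * ∑ X : Finset α with R.r X = k ∧ R.r (insert p X) = k + 1, sg X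

lemma sum_m (p : α) (k : ℕ) : ∑ G ∈ R.flats with R.r G = k + 1 ∧ p ∈ G, R.m G = R.a p k := by
  have e1 : ∑ G ∈ R.flats with R.r G = k + 1 ∧ p ∈ G, R.m G =
      (-1) ^ k * ∑ G ∈ R.flats with R.r G = k + 1 ∧ p ∈ G,
        ∑ Y : Finset α, if p ∉ R.cl Y ∧ R.cl (insert p Y) = G then sg Y else 0 := by
    rw [Finset.mul_sum]
    refine Finset.sum_congr rfl fun G hG => ?_
    obtain ⟨_, h1, h2⟩ := Finset.mem_filter.1 hG
    rw [m, R.g_form h2, h1, pow_succ, Finset.sum_filter]; ring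
  rw [e1, a, Finset.sum_comm, Finset.sum_filter]
  congr 1
  refine Finset.sum_congr rfl fun Y _ => ?_
  have h2 := R.mono Y p
  have h3 := R.unit Y p
  by_cases h : p ∉ R.cl Y
  · simp only [h, not_false_eq_true, true_and]
    rw [Finset.sum_ite_eq]
    have hp : p ∈ R.cl (insert p Y) := R.sub_cl _ (Finset.mem_insert_self p Y)
    simp only [Finset.mem_filter, R.cl_flat, true_and, r_cl, hp, and_true]
    rw [mem_cl] at h
    refine if_congr ?_ rfl rfl
    omega
  · simp only [h, false_and, if_false]
    rw [mem_cl, not_not] at h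
    rw [if_neg (by omega)]; simp

theorem logconc_top (p : α) (n : ℕ) (hr : R.r Finset.univ = n + 3) :
    R.a p n * R.a p (n + 2) ≤ R.a p (n + 1) ^ 2 := by
  have hE : ∅ ∈ R.flats := by
    rw [mem_flats]; intro e _
    have := R.loopless e
    rw [R.r0]; simp [this]
  have hT : Finset.univ ∈ R.flats := by
    rw [mem_flats]; intro e he; exact absurd (Finset.mem_univ e) he
  have := R.FS.logconc (m := R.m) hE R.r0 R.m_empty R.m_rec hT (Finset.mem_univ p) n hr
  have hbt : ∀ k, k < n + 2 → ∑ G ∈ R.FS.betw ∅ Finset.univ with R.FS.rk G = k + 1 ∧ p ∈ G, R.m G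
      = R.a p k := by
    intro k hk
    rw [← R.sum_m]
    refine Finset.sum_congr ?_ fun _ _ => rfl
    ext G
    simp only [Finset.mem_filter, FlatSys.mem_betw]
    constructor
    · rintro ⟨⟨h1, h2, h3⟩, h4, h5⟩
      exact ⟨h1, h4, h5⟩
    · rintro ⟨h1, h4, h5⟩
      refine ⟨⟨h1, Finset.empty_ssubset.2 ⟨p, h5⟩, Finset.ssubset_univ_iff.2 ?_⟩, h4, h5⟩
      rintro rfl; omega
  have htop : R.m Finset.univ = R.a p (n + 2) := by
    rw [← R.sum_m, Finset.sum_eq_single Finset.univ]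
    · intro G hG hne
      exfalso
      obtain ⟨h1, h2, h3⟩ := Finset.mem_filter.1 hG
      have := R.FS.rk_lt G h1 Finset.univ hT (Finset.ssubset_univ_iff.2 hne)
      change R.r G < R.r Finset.univ at this
      omega
    · intro h
      exfalso; exact h (Finset.mem_filter.2 ⟨hT, hr, Finset.mem_univ p⟩)
  rw [hbt n (by omega), hbt (n + 1) (by omega), htop] at this
  exact this

def trunc (N : ℕ) (hN : 1 ≤ N) : RankFn α where
  r X := min (R.r X) N
  r0 := by rw [R.r0]; simp
  mono X e := by have := R.mono X e; omega
  unit X e := by have := R.unit X e; omega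
  loc := R.trunc_loc N
  loopless e := by rw [R.loopless e]; omega

theorem logconc (p : α) (n : ℕ) (hr : n + 3 ≤ R.r Finset.univ) :
    R.a p n * R.a p (n + 2) ≤ R.a p (n + 1) ^ 2 := by
  have := (R.trunc (n + 3) (by omega)).logconc_top p n (by simp only [trunc]; omega)
  have e : ∀ k, k ≤ n + 2 → (R.trunc (n + 3) (by omega)).a p k = R.a p k := by
    intro k hk
    unfold a
    congr 1
    refine Finset.sum_congr ?_ fun _ _ => rfl
    ext X
    rw [Finset.mem_filter, Finset.mem_filter]
    simp only [Finset.mem_univ, true_and, trunc]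
    have := R.unit X p
    constructor <;> rintro ⟨h1, h2⟩ <;> constructor <;> omega
  rw [e n (by omega), e (n + 1) (by omega), e (n + 2) (by omega)] at this
  exact this

end RankFn
end SWL


namespace SWL
namespace SM

variable {E : Type*} [DecidableEq E] [Fintype E] (S : Semimatroid E)

lemma empty_mem : ∅ ∈ S.C := by
  obtain ⟨X, hX⟩ := S.C_nonempty
  exact S.mem_of_subset hX (Finset.empty_subset X)

lemma r_empty : S.r ∅ = 0 := by
  have := S.r_le_card (empty_mem S)
  simpa using this

lemma r_unit {Y : Finset E} {e : E} (h : insert e Y ∈ S.C) : S.r (insert e Y) ≤ S.r Y + 1 := by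
  have hY : Y ∈ S.C := S.mem_of_subset h (Finset.subset_insert e Y)
  have he : {e} ∈ S.C := S.mem_of_subset h (by simp)
  have hu : Y ∪ {e} = insert e Y := by ext; simp [or_comm]
  have h1 := S.submodular hY he (by rw [hu]; exact h)
  have h2 := S.r_le_card he
  rw [hu] at h1
  simp at h2
  omega

/-- rank of the underlying matroid of the semimatroid -/
def rM (X : Finset E) : ℕ := (S.C.filter (· ⊆ X)).sup S.r

lemma le_rM {X Y : Finset E} (hY : Y ∈ S.C) (h : Y ⊆ X) : S.r Y ≤ rM S X :=
  Finset.le_sup (f := S.r) (Finset.mem_filter.2 ⟨hY, h⟩)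

lemma exists_rM (X : Finset E) : ∃ Y ∈ S.C, Y ⊆ X ∧ S.r Y = rM S X := by
  obtain ⟨Y, hY, h⟩ := Finset.exists_mem_eq_sup (S.C.filter (· ⊆ X))
    ⟨∅, Finset.mem_filter.2 ⟨empty_mem S, Finset.empty_subset X⟩⟩ S.r
  obtain ⟨h1, h2⟩ := Finset.mem_filter.1 hY
  exact ⟨Y, h1, h2, h.symm⟩

lemma rM_mono {X Y : Finset E} (h : X ⊆ Y) : rM S X ≤ rM S Y := by
  obtain ⟨Z, h1, h2, h3⟩ := exists_rM S X
  rw [← h3]; exact le_rM S h1 (h2.trans h)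

lemma rM_of_max {X Y : Finset E} (hY : Y ∈ S.C) (h : Y ⊆ X)
    (hmax : ∀ e ∈ X, insert e Y ∈ S.C → e ∈ Y) : rM S X = S.r Y := by
  refine le_antisymm ?_ (le_rM S hY h)
  by_contra hlt
  obtain ⟨Z, h1, h2, h3⟩ := exists_rM S X
  obtain ⟨e, he, hc⟩ := S.augment hY h1 (by omega)
  rw [Finset.mem_sdiff] at he
  exact he.2 (hmax e (h2 he.1) hc)

lemma rM_central {X : Finset E} (h : X ∈ S.C) : rM S X = S.r X :=
  rM_of_max S h subset_rfl fun e he _ => he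

lemma exists_ext {X Y : Finset E} (hY : Y ∈ S.C) (h : Y ⊆ X) :
    ∃ Z ∈ S.C, Y ⊆ Z ∧ Z ⊆ X ∧ S.r Z = rM S X := by
  obtain ⟨Z, hZ, hmax⟩ := Finset.exists_max_image (S.C.filter fun Z => Y ⊆ Z ∧ Z ⊆ X) Finset.card
    ⟨Y, Finset.mem_filter.2 ⟨hY, subset_rfl, h⟩⟩
  obtain ⟨h1, h2, h3⟩ := Finset.mem_filter.1 hZ
  refine ⟨Z, h1, h2, h3, (rM_of_max S h1 h3 fun e he hc => ?_).symm⟩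
  by_contra hn
  have := hmax (insert e Z) (Finset.mem_filter.2
    ⟨hc, h2.trans (Finset.subset_insert e Z), Finset.insert_subset he h3⟩)
  rw [Finset.card_insert_of_notMem hn] at this
  omega

lemma rM_unit (X : Finset E) (e : E) : rM S (insert e X) ≤ rM S X + 1 := by
  obtain ⟨Z, h1, h2, h3⟩ := exists_rM S (insert e X)
  rw [← h3]
  by_cases he : e ∈ Z
  · have h4 := r_unit S (Y := Z.erase e) (e := e) (by rwa [Finset.insert_erase he])
    rw [Finset.insert_erase he] at h4
    have h5 := le_rM S (X := X) (S.mem_of_subset h1 (Finset.erase_subset e Z))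
      (Finset.subset_insert_iff.1 h2)
    omega
  · have := le_rM S h1 ((Finset.subset_insert_iff_of_notMem he).1 h2)
    omega

lemma rM_loc (X : Finset E) (e f : E) (he : rM S (insert e X) = rM S X)
    (hf : rM S (insert f X) = rM S X) : rM S (insert e (insert f X)) = rM S X := by
  refine le_antisymm ?_ (rM_mono S ((Finset.subset_insert f X).trans (Finset.subset_insert e _)))
  obtain ⟨Y, h1, h2, h3⟩ := exists_rM S X
  obtain ⟨Z, k1, k2, k3, k4⟩ := exists_ext S h1
    (h2.trans ((Finset.subset_insert f X).trans (Finset.subset_insert e _)))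
  rw [← k4]
  have c1 : Z ∩ insert e X ∈ S.C := S.mem_of_subset k1 Finset.inter_subset_left
  have c2 : Z ∩ insert f X ∈ S.C := S.mem_of_subset k1 Finset.inter_subset_left
  have l1 := le_rM S c1 Finset.inter_subset_right
  have l2 := le_rM S c2 Finset.inter_subset_right
  have hu : Z ∩ insert e X ∪ Z ∩ insert f X = Z := by
    ext a
    simp only [Finset.mem_union, Finset.mem_inter, Finset.mem_insert]
    constructor
    · tauto
    · intro h
      have := k3 h
      simp only [Finset.mem_insert] at this
      tauto
  have sm := S.submodular c1 c2 (by rw [hu]; exact k1)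
  rw [hu] at sm
  have l3 := S.r_mono h1 (S.mem_of_subset c1 Finset.inter_subset_left)
    (Finset.subset_inter (Finset.subset_inter k2 (h2.trans (Finset.subset_insert e X)))
      (Finset.subset_inter k2 (h2.trans (Finset.subset_insert f X)))) 
  omega

/-- defect of centrality -/
def cc (X : Finset (Option E)) : ℕ := if none ∉ X ∧ Finset.eraseNone X ∈ S.C then 0 else 1

def rt (X : Finset (Option E)) : ℕ := rM S (Finset.eraseNone X) + cc S X

lemma eN_none (X : Finset (Option E)) : Finset.eraseNone (insert none X) = Finset.eraseNone X := by
  ext a; simp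

lemma eN_some (X : Finset (Option E)) (a : E) :
    Finset.eraseNone (insert (some a) X) = insert a (Finset.eraseNone X) := by
  ext b; simp

lemma cc_le (X : Finset (Option E)) : cc S X ≤ 1 := by unfold cc; split_ifs <;> omega

lemma cc_zero {X : Finset (Option E)} : cc S X = 0 ↔ none ∉ X ∧ Finset.eraseNone X ∈ S.C := by
  unfold cc; split_ifs with h <;> simp [h]

lemma cc_mono (X : Finset (Option E)) (e : Option E) : cc S X ≤ cc S (insert e X) := by
  have h1 := cc_le S X
  by_cases h : cc S (insert e X) = 0
  · rw [cc_zero] at h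
    have : cc S X = 0 := by
      rw [cc_zero]
      refine ⟨fun hn => h.1 (Finset.mem_insert_of_mem hn), S.mem_of_subset h.2 ?_⟩
      intro a ha
      simp at ha ⊢; exact Or.inr ha
    omega
  · omega

lemma rM_eN_mono (X : Finset (Option E)) (e : Option E) :
    rM S (Finset.eraseNone X) ≤ rM S (Finset.eraseNone (insert e X)) := by
  apply rM_mono
  intro a ha
  simp at ha ⊢; exact Or.inr ha

lemma rt_unit (X : Finset (Option E)) (e : Option E) : rt S (insert e X) ≤ rt S X + 1 := by
  unfold rt
  have h1 := cc_le S X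
  have h2 := cc_le S (insert e X)
  cases e with
  | none => rw [eN_none]; omega
  | some a =>
    have h3 := rM_unit S (Finset.eraseNone X) a
    rw [← eN_some] at h3
    by_cases h : cc S X = 0
    · by_cases h' : cc S (insert (some a) X) = 0
      · omega
      · have : rM S (Finset.eraseNone (insert (some a) X)) = rM S (Finset.eraseNone X) := by
          rw [cc_zero] at h h'
          rw [rM_central S h.2]
          refine rM_of_max S h.2 ?_ fun b hb hc => ?_
          · rw [eN_some]; exact Finset.subset_insert _ _
          · rw [eN_some, Finset.mem_insert] at hb
            rcases hb with rfl | hb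
            · exfalso; apply h'
              rw [eN_some]
              exact ⟨by simpa using h.1, hc⟩
            · exact hb
        omega
    · omega

lemma rt_loc (X : Finset (Option E)) (e f : Option E) (he : rt S (insert e X) = rt S X)
    (hf : rt S (insert f X) = rt S X) : rt S (insert e (insert f X)) = rt S X := by
  unfold rt at *
  have a1 := cc_mono S X e
  have a2 := cc_mono S X f
  have a3 := rM_eN_mono S X e
  have a4 := rM_eN_mono S X f
  have b1 : rM S (Finset.eraseNone (insert e X)) = rM S (Finset.eraseNone X) := by omega
  have b2 : rM S (Finset.eraseNone (insert f X)) = rM S (Finset.eraseNone X) := by omega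
  have c1 : cc S (insert e X) = cc S X := by omega
  have c2 : cc S (insert f X) = cc S X := by omega
  have d1 : rM S (Finset.eraseNone (insert e (insert f X))) = rM S (Finset.eraseNone X) := by
    cases e with
    | none => rw [eN_none, b2]
    | some a =>
      cases f with
      | none => rw [eN_some, eN_none, ← eN_some, b1]
      | some b =>
        rw [eN_some] at b1 b2
        rw [eN_some, eN_some]
        exact rM_loc S _ a b b1 b2
  have d2 : cc S (insert e (insert f X)) = cc S X := by
    have := cc_mono S (insert f X) e
    have := cc_le S (insert e (insert f X))
    by_cases h : cc S X = 0
    · rw [h] at c1 c2 ⊢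
      have hc1 := (cc_zero S).1 c1
      have hc2 := (cc_zero S).1 c2
      have hc := (cc_zero S).1 h
      rw [cc_zero]
      cases e with
      | none => simp at hc1
      | some a =>
        cases f with
        | none => simp at hc2
        | some b =>
          rw [eN_some] at b1 b2 hc1 hc2
          refine ⟨by simpa using hc.1, ?_⟩
          rw [eN_some, eN_some]
          have i1 : insert a (Finset.eraseNone X) ∩ insert b (Finset.eraseNone X) ∈ S.C :=
            S.mem_of_subset hc1.2 Finset.inter_subset_left
          have l1 := S.r_mono hc.2 i1 (Finset.subset_inter (Finset.subset_insert _ _)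
            (Finset.subset_insert _ _))
          have l2 := S.r_mono i1 hc1.2 Finset.inter_subset_left
          rw [rM_central S hc1.2, rM_central S hc.2] at b1
          have := S.union_mem hc1.2 hc2.2 (by omega)
          refine S.mem_of_subset this ?_
          intro c hc
          simp only [Finset.mem_insert, Finset.mem_union] at hc ⊢
          tauto
    · omega
  rw [d1, d2]

/-- the matroid rank function associated with a loopless semimatroid -/
def toRank (hl : ¬ ∃ e : E, {e} ∈ S.C ∧ S.r {e} = 0) : RankFn (Option E) where
  r := rt S
  r0 := by
    have : Finset.eraseNone (∅ : Finset (Option E)) = ∅ := by ext; simp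
    unfold rt
    rw [this, rM_central S (empty_mem S), r_empty, (cc_zero S).2]
    rw [this]
    exact ⟨by simp, empty_mem S⟩
  mono X e := by
    have := cc_mono S X e
    have := rM_eN_mono S X e
    unfold rt; omega
  unit := rt_unit S
  loc := rt_loc S
  loopless e := by
    have h0 : Finset.eraseNone (∅ : Finset (Option E)) = ∅ := by ext; simp
    cases e with
    | none =>
      have h1 : Finset.eraseNone ({none} : Finset (Option E)) = ∅ := by ext; simp
      unfold rt cc
      rw [h1, rM_central S (empty_mem S), r_empty]
      simp
    | some a =>
      have h1 : Finset.eraseNone ({some a} : Finset (Option E)) = {a} := by ext; simp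
      unfold rt cc
      rw [h1]
      by_cases h : {a} ∈ S.C
      · have h2 := S.r_le_card h
        have h3 : S.r {a} ≠ 0 := fun h' => hl ⟨a, h, h'⟩
        rw [rM_central S h, if_pos ⟨by simp, h⟩]
        simp at h2
        omega
      · rw [rM_of_max S (empty_mem S) (Finset.empty_subset _), r_empty, if_neg (fun h' => h h'.2)]
        intro b hb hc
        rw [Finset.mem_singleton] at hb
        subst hb
        exact absurd hc h

lemma rt_univ : rt S Finset.univ = S.rank + 1 := by
  have h1 : Finset.eraseNone (Finset.univ : Finset (Option E)) = Finset.univ := by ext; simp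
  unfold rt cc rM Semimatroid.rank
  rw [h1, if_neg (by simp)]
  simp

lemma whitney_eq {k : ℕ} (hk : k ≤ S.rank) :
    S.whitney k = (-1) ^ k * ∑ A ∈ S.C with S.r A = k, (-1 : ℤ) ^ A.card := by
  unfold Semimatroid.whitney Semimatroid.charPoly
  congr 1
  rw [Polynomial.finsetSum_coeff, Finset.sum_filter]
  refine Finset.sum_congr rfl fun A hA => ?_
  have hle : S.r A ≤ S.rank := Finset.le_sup (f := S.r) hA
  have : ((-1 : Polynomial ℤ) ^ A.card) = Polynomial.C ((-1) ^ A.card) := by simp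
  rw [this, Polynomial.coeff_C_mul, Polynomial.coeff_X_pow]
  by_cases h : S.r A = k
  · rw [if_pos h, if_pos (by omega), mul_one]
  · rw [if_neg h, if_neg (by omega), mul_zero]

lemma a_eq (hl : ¬ ∃ e : E, {e} ∈ S.C ∧ S.r {e} = 0) (k : ℕ) :
    (toRank S hl).a none k = (-1) ^ k * ∑ A ∈ S.C with S.r A = k, (-1 : ℝ) ^ A.card := by
  unfold RankFn.a
  congr 1
  have hcond : ∀ X : Finset (Option E), ((toRank S hl).r X = k ∧
      (toRank S hl).r (insert none X) = k + 1) ↔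
      (none ∉ X ∧ Finset.eraseNone X ∈ S.C) ∧ S.r (Finset.eraseNone X) = k := by
    intro X
    change (rt S X = k ∧ rt S (insert none X) = k + 1) ↔ _
    have h1 : cc S (insert none X) = 1 := by unfold cc; simp
    have h2 := cc_le S X
    unfold rt
    rw [h1, eN_none, ← cc_zero]
    constructor
    · rintro ⟨a, b⟩
      have hz : cc S X = 0 := by omega
      refine ⟨hz, ?_⟩
      rw [← rM_central S ((cc_zero S).1 hz).2]; omega
    · rintro ⟨a, b⟩
      rw [← rM_central S ((cc_zero S).1 a).2] at b
      omega
  refine Finset.sum_nbij' Finset.eraseNone (fun A => A.map Function.Embedding.some) ?_ ?_ ?_ ?_ ?_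
  · intro X hX
    have := (hcond X).1 (Finset.mem_filter.1 hX).2
    exact Finset.mem_filter.2 ⟨this.1.2, this.2⟩
  · intro A hA
    obtain ⟨h1, h2⟩ := Finset.mem_filter.1 hA
    refine Finset.mem_filter.2 ⟨Finset.mem_univ _, (hcond _).2 ?_⟩
    have h0 : Finset.eraseNone (A.map Function.Embedding.some) = A := by ext; simp
    rw [h0]
    exact ⟨⟨by simp, h1⟩, h2⟩
  · intro X hX
    have := (hcond X).1 (Finset.mem_filter.1 hX).2
    ext o
    cases o with
    | none => simpa using this.1.1
    | some a => simp
  · intro A _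
    ext; simp
  · intro X hX
    have := (hcond X).1 (Finset.mem_filter.1 hX).2
    have hX' : (Finset.eraseNone X).map Function.Embedding.some = X := by
      ext o
      cases o with
      | none => simpa using this.1.1
      | some a => simp
    unfold RankFn.sg
    conv_lhs => rw [← hX', Finset.card_map]

end SM
end SWL


/-- For a loopless semimatroid, the sequence `w_0(𝒞), …, w_{r(𝒞)}(𝒞)` of
unsigned Whitney numbers of the first kind is log-concave:
`w_{k−1}(𝒞) ⋅ w_{k+1}(𝒞) ≤ w_k(𝒞)²` for all `1 ≤ k ≤ r(𝒞) − 1`. -/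
theorem Semimatroid.whitney_log_concave
    {E : Type*} [DecidableEq E] [Fintype E] (S : Semimatroid E)
    (hloopless : ¬ ∃ e : E, {e} ∈ S.C ∧ S.r {e} = 0) :
    ∀ k : ℕ, 1 ≤ k → k + 1 ≤ S.rank →
      S.whitney (k - 1) * S.whitney (k + 1) ≤ S.whitney k ^ 2 := by
  intro k hk hkr
  obtain ⟨n, rfl⟩ : ∃ n, k = n + 1 := ⟨k - 1, by omega⟩
  have h := (SWL.SM.toRank S hloopless).logconc none n (by
    change n + 3 ≤ SWL.SM.rt S Finset.univ
    rw [SWL.SM.rt_univ]; omega)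
  rw [SWL.SM.a_eq, SWL.SM.a_eq, SWL.SM.a_eq] at h
  rw [Nat.add_sub_cancel, SWL.SM.whitney_eq S (by omega : n ≤ S.rank),
    SWL.SM.whitney_eq S (by omega : n + 1 + 1 ≤ S.rank),
    SWL.SM.whitney_eq S (by omega : n + 1 ≤ S.rank)]
  exact_mod_cast h
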